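/- arXiv:1306.4791 — 7 statements merged into one kernel-verified Lean document; each statement's English description precedes it below -/
import Mathlib

section
/- Let L be a field of characteristic p > 0 and n ≥ 1. Let f_1, …, f_{n−1} ∈ L(x_1, …, x_n) be p-independent over the subfield M = L(x_1^p, …, x_n^p). Let d be an L-derivation of L(x_1, …, x_n) such that d(f_1) = ⋯ = d(f_{n−1}) = 0. Then there exists c ∈ L(x_1, …, x_n) such that d = c·d_F, where F = (f_1, …, f_{n−1}). -/
open MvPolynomial

/-!
Write `F = L(x₀, …, x_m)` and `M = L(x₀ᵖ, …, x_mᵖ)`. Since `[F : M] ≤ p^(m+1)` and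
`p`-independence gives `[M(f) : M] ≥ p^m`, the degree `[F : M(f)]` is at most `p`; as `Fᵖ ⊆ M`, this
forces `F = M(f)(t)` for some `t`. An `L`-derivation of `F` kills `M`, so one that kills every `fᵢ`
is determined by its value at `t` (`exists_determining_element`).

The Jacobian derivation `J = d_F` kills every `fᵢ` (two equal rows). If `J t` were zero, a nonzero
kernel vector `v` of the Jacobian matrix of `(f, t)` would give a derivation `∑ vⱼ ∂ⱼ` killing all
`fᵢ` and `t`, hence zero, although it maps `x_b` to `v_b`. So `J t ≠ 0`, and `d` and
`(d t / J t) • J` agree on `f` and `t`, hence everywhere.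
-/

/-- The constants of a derivation of a field form a subfield, so adjoining constants to a field
of constants yields constants only. -/
theorem derivation_eq_zero_of_mem_adjoin {L E F : Type*} [Field L] [Field E] [Field F]
    [Algebra L F] [Algebra E F] (D : Derivation L F F) (S : Set F)
    (hE : ∀ a : E, D (algebraMap E F a) = 0) (hS : ∀ s ∈ S, D s = 0) :
    ∀ a ∈ IntermediateField.adjoin E S, D a = 0 := by
  intro a ha
  induction ha using IntermediateField.adjoin_induction with
  | mem x hx => exact hS x hx
  | algebraMap x => exact hE x
  | add x y _ _ hx hy => simp [hx, hy]
  | inv x _ hx => simp [Derivation.leibniz_inv, hx]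
  | mul x y _ _ hx hy => simp [hx, hy]

theorem adjoin_X_eq_top {L σ F : Type*} [Field L] [Field F]
    [Algebra (MvPolynomial σ L) F] [IsFractionRing (MvPolynomial σ L) F]
    [Algebra L F] [IsScalarTower L (MvPolynomial σ L) F] :
    IntermediateField.adjoin L
      (Set.range fun i : σ => algebraMap (MvPolynomial σ L) F (X i)) = ⊤ := by
  rw [eq_top_iff]
  rintro a -
  have key : ∀ q : MvPolynomial σ L, algebraMap _ F q ∈ IntermediateField.adjoin L
      (Set.range fun i : σ => algebraMap (MvPolynomial σ L) F (X i)) := by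
    intro q
    induction q using MvPolynomial.induction_on with
    | C r =>
      rw [← MvPolynomial.algebraMap_eq, ← IsScalarTower.algebraMap_apply]
      exact IntermediateField.algebraMap_mem _ r
    | add x y hx hy => rw [map_add]; exact add_mem hx hy
    | mul_X x i hx =>
      rw [map_mul]
      exact mul_mem hx (IntermediateField.subset_adjoin _ _ ⟨i, rfl⟩)
  obtain ⟨x, y, -, rfl⟩ := IsFractionRing.div_surjective (A := MvPolynomial σ L) a
  exact div_mem (key x) (key y)

/-- In characteristic `p`, the Frobenius maps `L(S)` into `L(Sᵖ)`. -/
theorem pow_mem_adjoin_pow {L F ι : Type*} [Field L] [Field F] [Algebra L F]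
    (p : ℕ) [Fact p.Prime] [CharP F p] (x : ι → F) :
    ∀ a ∈ IntermediateField.adjoin L (Set.range x),
      a ^ p ∈ IntermediateField.adjoin L (Set.range fun i => x i ^ p) := by
  intro a ha
  induction ha using IntermediateField.adjoin_induction with
  | mem y hy =>
    obtain ⟨i, rfl⟩ := hy
    exact IntermediateField.subset_adjoin _ _ ⟨i, rfl⟩
  | algebraMap y => rw [← map_pow]; exact IntermediateField.algebraMap_mem _ _
  | add y z _ _ hy hz => rw [add_pow_char]; exact add_mem hy hz
  | inv y _ hy => rw [inv_pow]; exact inv_mem hy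
  | mul y z _ _ hy hz => rw [mul_pow]; exact mul_mem hy hz

theorem finrank_adjoin_simple_le {M F : Type*} [Field M] [Field F] [Algebra M F]
    (p : ℕ) (hp : p ≠ 0) (a : F) (b : M) (h : a ^ p = algebraMap M F b) :
    IsIntegral M a ∧ Module.finrank M (IntermediateField.adjoin M {a}) ≤ p := by
  have hm := Polynomial.monic_X_pow_sub_C b hp
  have hev : Polynomial.aeval a (Polynomial.X ^ p - Polynomial.C b) = 0 := by simp [h]
  have hi : IsIntegral M a := ⟨_, hm, by simpa [Polynomial.aeval_def] using hev⟩
  refine ⟨hi, ?_⟩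
  rw [IntermediateField.adjoin.finrank hi]
  refine (Polynomial.natDegree_le_of_dvd (minpoly.dvd M a hev) hm.ne_zero).trans ?_
  rw [Polynomial.natDegree_X_pow_sub_C]

theorem finrank_adjoin_le_pow {M F ι : Type*} [Field M] [Field F] [Algebra M F]
    (p : ℕ) (hp : p ≠ 0) (x : ι → F) (h : ∀ i, ∃ b : M, x i ^ p = algebraMap M F b)
    (s : Finset ι) :
    Module.finrank M (IntermediateField.adjoin M (x '' s)) ≤ p ^ s.card := by
  classical
  induction s using Finset.induction_on with
  | empty =>
    rw [Finset.coe_empty, Set.image_empty, IntermediateField.adjoin_empty]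
    simp
  | insert i s his ih =>
    obtain ⟨b, hb⟩ := h i
    rw [Finset.coe_insert, Set.image_insert_eq, Set.insert_eq, IntermediateField.adjoin_union,
      Finset.card_insert_of_notMem his, pow_succ']
    exact (IntermediateField.finrank_sup_le _ _).trans
      (Nat.mul_le_mul (finrank_adjoin_simple_le p hp _ b hb).2 ih)

/-- An extension `F/K` of degree at most `p` with `Fᵖ ⊆ K` is simple: for `t ∉ K` the polynomial
`Xᵖ - tᵖ` is irreducible over `K`. -/
theorem exists_adjoin_simple_eq_top {K F : Type*} [Field K] [Field F] [Algebra K F]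
    (p : ℕ) [hp : Fact p.Prime] [CharP F p] [FiniteDimensional K F]
    (hpow : ∀ a : F, ∃ b : K, a ^ p = algebraMap K F b) (hle : Module.finrank K F ≤ p) :
    ∃ t : F, IntermediateField.adjoin K {t} = ⊤ := by
  by_cases hK : (⊥ : IntermediateField K F) = ⊤
  · exact ⟨0, by rw [IntermediateField.adjoin_zero, hK]⟩
  obtain ⟨t, ht⟩ : ∃ t : F, t ∉ (⊥ : IntermediateField K F) := by
    by_contra! hh
    exact hK (eq_top_iff.2 fun a _ => hh a)
  obtain ⟨b, hb⟩ := hpow t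
  have hirr : Irreducible (Polynomial.X ^ p - Polynomial.C b) := by
    refine X_pow_sub_C_irreducible_of_prime hp.out fun c hc => ht ?_
    have : t = algebraMap K F c := by
      apply frobenius_inj F p
      simp only [frobenius_def]
      rw [hb, ← hc, map_pow]
    rw [this]
    exact IntermediateField.algebraMap_mem _ _
  have hmin := minpoly.eq_of_irreducible_of_monic hirr (x := t) (by simp [hb])
    (Polynomial.monic_X_pow_sub_C b hp.out.ne_zero)
  refine ⟨t, ?_⟩
  have hfr : Module.finrank K (IntermediateField.adjoin K {t}) = p := by
    rw [IntermediateField.adjoin.finrank (IsIntegral.of_finite K t), ← hmin,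
      Polynomial.natDegree_X_pow_sub_C]
  exact IntermediateField.eq_of_le_of_finrank_le le_top
    (by rw [IntermediateField.finrank_top', hfr]; exact hle)

/-- If `f₁, …, f_m` are `p`-independent over `M = L(x₀ᵖ, …, x_mᵖ)`, then
`[F : M(f)] ≤ p^(m+1) / p^m = p`, so `F = M(f)(t)`, and an `L`-derivation of `F` (which
automatically kills `M`) vanishes once it kills `f₁, …, f_m` and `t`. -/
theorem exists_determining_element {L F : Type*} [Field L] [Field F] [Algebra L F]
    (p : ℕ) [hp : Fact p.Prime] [CharP F p] (m : ℕ) (x : Fin (m + 1) → F)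
    (hx : IntermediateField.adjoin L (Set.range x) = ⊤) (f : Fin m → F)
    (hind : LinearIndependent ↥(IntermediateField.adjoin L (Set.range fun i => x i ^ p))
      (fun e : Fin m → Fin p => ∏ i, f i ^ (e i : ℕ))) :
    ∃ t : F, ∀ D : Derivation L F F, (∀ i, D (f i) = 0) → D t = 0 → ∀ a, D a = 0 := by
  set M := IntermediateField.adjoin L (Set.range fun i => x i ^ p) with hM
  have hpow : ∀ a : F, a ^ p ∈ M := fun a =>
    pow_mem_adjoin_pow p x a (hx ▸ IntermediateField.mem_top)
  have hpowM : ∀ a : F, ∃ b : M, a ^ p = algebraMap M F b := fun a => ⟨⟨_, hpow a⟩, rfl⟩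
  have htop : IntermediateField.adjoin M (x '' (Finset.univ : Finset (Fin (m + 1)))) = ⊤ := by
    rw [Finset.coe_univ, Set.image_univ, eq_top_iff]
    rintro a -
    have ha : a ∈ IntermediateField.adjoin L (Set.range x) := hx ▸ IntermediateField.mem_top
    have hle : IntermediateField.adjoin L (Set.range x) ≤
        (IntermediateField.adjoin M (Set.range x)).restrictScalars L :=
      IntermediateField.adjoin_le_iff.2 (IntermediateField.subset_adjoin M _)
    exact hle ha
  have hfin : FiniteDimensional M F := by
    have := IntermediateField.finiteDimensional_adjoin (K := M) (L := F)
      (S := x '' (Finset.univ : Finset (Fin (m + 1))))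
      (fun a _ => by
        obtain ⟨b, hb⟩ := hpowM a
        exact (finrank_adjoin_simple_le p hp.out.ne_zero a b hb).1)
    rw [htop] at this
    exact Module.Finite.equiv (IntermediateField.topEquiv (F := M) (E := F)).toLinearEquiv
  have hdeg : Module.finrank M F ≤ p ^ (m + 1) := by
    have := finrank_adjoin_le_pow p hp.out.ne_zero x (fun i => hpowM _) Finset.univ
    rwa [htop, IntermediateField.finrank_top', Finset.card_univ, Fintype.card_fin] at this
  set K := IntermediateField.adjoin M (Set.range f) with hK
  have hKdeg : p ^ m ≤ Module.finrank M K := by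
    have hmem : ∀ e : Fin m → Fin p, ∏ i, f i ^ (e i : ℕ) ∈ K := fun e =>
      prod_mem fun i _ => pow_mem (IntermediateField.subset_adjoin M _ (Set.mem_range_self i)) _
    have hli : LinearIndependent M (fun e : Fin m → Fin p => (⟨∏ i, f i ^ (e i : ℕ), hmem e⟩ : K)) :=
      LinearIndependent.of_comp K.val.toLinearMap hind
    simpa using hli.fintype_card_le_finrank
  have hle : Module.finrank K F ≤ p := by
    have hmul := Module.finrank_mul_finrank M K F
    have hpos : 0 < p ^ m := pow_pos hp.out.pos m
    refine Nat.le_of_mul_le_mul_left ?_ hpos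
    calc p ^ m * Module.finrank K F ≤ Module.finrank M K * Module.finrank K F :=
          Nat.mul_le_mul_right _ hKdeg
      _ ≤ p ^ m * p := by rw [hmul, ← pow_succ]; exact hdeg
  obtain ⟨t, ht⟩ := exists_adjoin_simple_eq_top (K := K) (F := F) p
    (fun a => ⟨algebraMap M K ⟨_, hpow a⟩, rfl⟩) hle
  refine ⟨t, fun D hDf hDt a => ?_⟩
  have hDM : ∀ a ∈ M, D a = 0 :=
    derivation_eq_zero_of_mem_adjoin D _ (fun a => D.map_algebraMap a) (by
      rintro _ ⟨i, rfl⟩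
      simp [Derivation.leibniz_pow])
  have hDK : ∀ a ∈ K, D a = 0 :=
    derivation_eq_zero_of_mem_adjoin D _ (fun a => hDM a a.2) (by
      rintro _ ⟨i, rfl⟩
      exact hDf i)
  exact derivation_eq_zero_of_mem_adjoin (E := K) D {t} (fun a => hDK a a.2)
    (by rintro _ rfl; exact hDt) a (ht ▸ IntermediateField.mem_top)

theorem derivation_sum_apply {L F ι : Type*} [Field L] [Field F] [Algebra L F] (s : Finset ι)
    (D : ι → Derivation L F F) (g : F) : (∑ j ∈ s, D j) g = ∑ j ∈ s, D j g := by
  have h := map_sum (Derivation.coeFnAddMonoidHom (R := L) (A := F) (M := F)) D s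
  exact (congrFun h g).trans (Finset.sum_apply g s _)

/-- The Jacobian determinant is a derivation in `g`: expansion along the last row writes it as a
combination of the `δ j` with the cofactors as coefficients. -/
theorem exists_jacobian_derivation {L F : Type*} [Field L] [Field F] [Algebra L F] (m : ℕ)
    (δ : Fin (m + 1) → Derivation L F F) (f : Fin m → F) :
    ∃ J : Derivation L F F, ∀ g : F,
      J g = Matrix.det (Matrix.of (Fin.snoc (fun a b => δ b (f a)) (fun b => δ b g))) := by
  refine ⟨∑ j : Fin (m + 1), ((-1) ^ (m + (j : ℕ)) * Matrix.det (Matrix.of fun a b =>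
    δ (j.succAbove b) (f a))) • δ j, fun g => ?_⟩
  rw [Matrix.det_succ_row _ (Fin.last m), derivation_sum_apply]
  refine Finset.sum_congr rfl fun j _ => ?_
  have hsub : (Matrix.of (Fin.snoc (fun a b => δ b (f a)) (fun b => δ b g) :
      Fin (m + 1) → Fin (m + 1) → F)).submatrix (Fin.last m).succAbove j.succAbove =
      Matrix.of fun a b => δ (j.succAbove b) (f a) := by
    ext a b
    simp
  rw [hsub]
  simp only [Derivation.smul_apply, smul_eq_mul, Fin.val_last, Matrix.of_apply, Fin.snoc_last]
  ring

/-- Lemma 1 (positive-characteristic analog of Makar-Limanov's lemma).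
`F` is (a model of) the fraction field `L(x₁,…,xₙ)` with `n = m + 1 ≥ 1`,
`δ i` is the unique `L`-derivation of `F` extending `∂/∂xᵢ`,
`f₁,…,f_{n-1}` are `p`-independent over `M = L(x₁^p,…,xₙ^p)`,
and `d` is an `L`-derivation of `F` killing all the `fᵢ`.
Then `d = c · d_F` for some `c ∈ F`, where
`d_F(g) = det` of the matrix with rows `(∂fₐ/∂x_b)` and last row `(∂g/∂x_b)`. -/
theorem lemma1_jacobian_factorization
    {L : Type*} [Field L] (p : ℕ) [Fact p.Prime] [CharP L p] (m : ℕ)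
    (F : Type*) [Field F] [Algebra (MvPolynomial (Fin (m + 1)) L) F]
    [IsFractionRing (MvPolynomial (Fin (m + 1)) L) F]
    [Algebra L F] [IsScalarTower L (MvPolynomial (Fin (m + 1)) L) F]
    (δ : Fin (m + 1) → Derivation L F F)
    (hδ : ∀ (i : Fin (m + 1)) (q : MvPolynomial (Fin (m + 1)) L),
      δ i (algebraMap (MvPolynomial (Fin (m + 1)) L) F q) =
        algebraMap (MvPolynomial (Fin (m + 1)) L) F (pderiv i q))
    (f : Fin m → F)
    (hind : LinearIndependent
      ↥(IntermediateField.adjoin L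
          (Set.range fun i : Fin (m + 1) =>
            algebraMap (MvPolynomial (Fin (m + 1)) L) F (X i) ^ p))
      (fun e : Fin m → Fin p => ∏ i, f i ^ (e i : ℕ)))
    (d : Derivation L F F) (hd : ∀ i, d (f i) = 0) :
    ∃ c : F, ∀ g : F,
      d g = c * Matrix.det (Matrix.of (Fin.snoc (fun a b => δ b (f a)) (fun b => δ b g))) := by
  have : CharP F p := charP_of_injective_algebraMap (algebraMap L F).injective p
  obtain ⟨t, ht⟩ := exists_determining_element p m
    (fun i => algebraMap (MvPolynomial (Fin (m + 1)) L) F (X i)) adjoin_X_eq_top f hind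
  obtain ⟨J, hJ⟩ := exists_jacobian_derivation m δ f
  have hJf : ∀ i, J (f i) = 0 := by
    intro i
    rw [hJ]
    refine Matrix.det_zero_of_row_eq (Fin.castSucc_lt_last i).ne ?_
    ext b
    simp
  have hJt : J t ≠ 0 := by
    intro h0
    rw [hJ] at h0
    -- A kernel vector `v` of the singular Jacobian matrix gives a derivation `∑ vⱼ ∂ⱼ` killing
    -- `f` and `t`, hence zero; but its value at `x_b` is `v_b`.
    obtain ⟨v, hv0, hv⟩ := Matrix.exists_mulVec_eq_zero_iff.2 h0
    have hD : ∀ g, (∑ j, v j • δ j : Derivation L F F) g = ∑ j, δ j g * v j := by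
      intro g
      rw [derivation_sum_apply]
      exact Finset.sum_congr rfl fun j _ => by simp [mul_comm]
    have hzero := ht (∑ j, v j • δ j)
      (fun i => by
        have := congrFun hv i.castSucc
        rw [hD]
        simpa [Matrix.mulVec, dotProduct] using this)
      (by
        have := congrFun hv (Fin.last m)
        rw [hD]
        simpa [Matrix.mulVec, dotProduct] using this)
    refine hv0 (funext fun b => ?_)
    have := hzero (algebraMap (MvPolynomial (Fin (m + 1)) L) F (X b))
    rw [hD] at this
    simpa [hδ, pderiv_X, Pi.single_apply, apply_ite, ite_mul] using this
  refine ⟨d t / J t, fun g => ?_⟩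
  have h := ht (d - (d t / J t) • J) (fun i => by simp [hd, hJf])
    (by simp [div_mul_cancel₀ _ hJt]) g
  rw [← hJ]
  simpa [sub_eq_zero] using h
end

section
/- Let K be a unique factorization domain of characteristic p > 0. Assume the polynomials f_1, …, f_{n−1} ∈ K[x_1, …, x_n] are p-independent over K[x_1^p, …, x_n^p], and put F̄ = dgcd(f_1, …, f_{n−1}). Let d be a K-derivation of K[x_1, …, x_n] such that d(f_1) = ⋯ = d(f_{n−1}) = 0. Then F̄·d = h·d_F for some polynomial h ∈ K[x_1, …, x_n] such that h is associated to gcd(d(x_1), …, d(x_n)), where F = (f_1, …, f_{n−1}). -/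
/-!
Let `J` be the `m × (m + 1)` Jacobian matrix of the `f_a`, and let `w_j` be its signed maximal minors,
so that `d_F(g) = ∑ j, ∂_j g * w_j`. By the chain rule `d(f_a) = 0` says that `v = (d(x_j))_j` lies in
the kernel of `J`, and so does `w`.

The characteristic `p` input is that some `w_k` is nonzero (`jacobian_rows_independent` and
`exists_cofactor_ne_zero`). Put `L = K(x)` and `k = Frac K[x^p]`, so that `L ^ p ⊆ k`. By
`p`-independence, `f_a` is not in the field `E` generated over `k` by the other `f_b`, and
`exists_derivation_ne_zero` gives an `E`-derivation of `L` that does not kill `f_a`. Such derivations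
for all `a` show that the rows of `J` are independent.

The kernel of `J` then has rank one, whence `w_k v_i = v_k w_i`. As `F̄ = gcd(w)`, the vector `w / F̄` is
primitive, and unique factorization gives `v = h * (w / F̄)` with `h = gcd(v)` (`exists_gcd_smul`).
-/

open MvPolynomial

/-! ### Derivations of purely inseparable extensions of exponent one -/

/-- The minimal polynomial of `y` over `M` is `T ^ p - y ^ p`. -/
theorem finrank_adjoin_simple_of_pow_char {M L : Type*} [Field M] [Field L] [Algebra M L]
    (p : ℕ) [Fact p.Prime] [CharP L p]
    (hp : ∀ x : L, x ^ p ∈ (algebraMap M L).range)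
    (y : L) (hy : y ∉ (algebraMap M L).range) :
    Module.finrank M (IntermediateField.adjoin M {y}) = p ∧
      FiniteDimensional M (IntermediateField.adjoin M {y}) := by
  have hp0 : p.Prime := Fact.out
  obtain ⟨a, ha⟩ := hp y
  have hirr : Irreducible ((Polynomial.X : Polynomial M) ^ p - Polynomial.C a) := by
    apply X_pow_sub_C_irreducible_of_prime hp0
    intro b hb
    apply hy
    refine ⟨b, frobenius_inj L p ?_⟩
    simp only [frobenius_def]
    rw [← map_pow, hb, ha]
  have hmin : (Polynomial.X : Polynomial M) ^ p - Polynomial.C a = minpoly M y :=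
    minpoly.eq_of_irreducible_of_monic hirr (by simp [ha])
      (Polynomial.monic_X_pow_sub_C a hp0.ne_zero)
  have hint : IsIntegral M y := by
    refine ⟨_, Polynomial.monic_X_pow_sub_C a hp0.ne_zero, ?_⟩
    simp [ha]
  refine ⟨?_, IntermediateField.adjoin.finiteDimensional hint⟩
  rw [IntermediateField.adjoin.finrank hint, ← hmin, Polynomial.natDegree_X_pow_sub_C]

/-- If every `M`-derivation of `L = M(g)` killed `g`, all of them would vanish, so `L / M` would be
unramified, hence separable; being purely inseparable as well, it would be trivial. -/
theorem exists_derivation_ne_zero_of_adjoin_eq_top {M L : Type*} [Field M] [Field L] [Algebra M L]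
    (p : ℕ) [Fact p.Prime] [CharP L p]
    (hp : ∀ x : L, x ^ p ∈ (algebraMap M L).range)
    (g : L) (hg : g ∉ (algebraMap M L).range) (htop : IntermediateField.adjoin M {g} = ⊤) :
    ∃ D : Derivation M L L, D g ≠ 0 := by
  by_contra! hD
  have hzero : ∀ D : Derivation M L L, D = 0 := by
    intro D
    -- The field of constants of `D` contains `g`, hence is everything.
    let S : IntermediateField M L :=
      { carrier := {x | D x = 0}
        mul_mem' := fun {a b} ha hb => by
          simp only [Set.mem_ofPred_eq] at *
          simp [Derivation.leibniz, ha, hb]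
        add_mem' := fun {a b} ha hb => by
          simp only [Set.mem_ofPred_eq] at *
          simp [ha, hb]
        algebraMap_mem' := fun r => by simp
        inv_mem' := fun x hx => by
          simp only [Set.mem_ofPred_eq] at *
          simp [Derivation.leibniz_inv, hx] }
    have hS : IntermediateField.adjoin M {g} ≤ S := by
      rw [IntermediateField.adjoin_simple_le_iff]
      exact hD D
    ext x
    exact hS (htop ▸ IntermediateField.mem_top)
  have hfin : FiniteDimensional M L := by
    have := (finrank_adjoin_simple_of_pow_char p hp g hg).2
    rw [htop] at this
    exact IntermediateField.topEquiv.toLinearEquiv.finiteDimensional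
  have hun : Algebra.FormallyUnramified M L := by
    constructor
    rw [← Submodule.subsingleton_iff L, ← subsingleton_iff_bot_eq_top,
      ← KaehlerDifferential.span_range_derivation, eq_comm, Submodule.span_eq_bot]
    rintro _ ⟨x, rfl⟩
    rw [← Module.forall_dual_apply_eq_zero_iff L]
    intro φ
    exact congrArg (fun D : Derivation M L L => D x) (hzero (φ.compDer (KaehlerDifferential.D M L)))
  have hsep : Algebra.IsSeparable M L := (Algebra.FormallyUnramified.iff_isSeparable M L).1 hun
  have hchar : CharP M p := (algebraMap M L).charP (algebraMap M L).injective p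
  have hexp : ExpChar M p := ExpChar.prime Fact.out
  have hpi : IsPurelyInseparable M L := (isPurelyInseparable_iff_pow_mem M p).2 fun x =>
    ⟨1, by simpa using hp x⟩
  exact hg (IsPurelyInseparable.surjective_algebraMap_of_isSeparable M L g)

/-- In an extension `L / E` with `L ^ p ⊆ E`, an element outside `E` is detected by an
`E`-derivation. The derivation is taken linear over an intermediate field `M` that is maximal among
those missing `g`; degrees `p` then force `L = M(g)`. -/
theorem exists_derivation_ne_zero {E L : Type*} [Field E] [Field L] [Algebra E L]
    (p : ℕ) [Fact p.Prime] [CharP L p]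
    (hp : ∀ x : L, x ^ p ∈ (algebraMap E L).range)
    (g : L) (hg : g ∉ (algebraMap E L).range) :
    ∃ D : Derivation E L L, D g ≠ 0 := by
  obtain ⟨M, -, hgM, hmax⟩ := zorn_le_nonempty₀ {M : IntermediateField E L | g ∉ M}
    (by
      intro c hc hchain y hy
      have : Nonempty c := ⟨⟨y, hy⟩⟩
      refine ⟨⨆ i : c, i.1, ?_, fun z hz => le_iSup (fun i : c => i.1) ⟨z, hz⟩⟩
      intro hmem
      rw [← SetLike.mem_coe, IntermediateField.coe_iSup_of_directed hchain.directedOn.directed_val,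
        Set.mem_iUnion] at hmem
      obtain ⟨i, hi⟩ := hmem
      exact hc i.2 hi)
    ⊥ (by simpa [IntermediateField.mem_bot] using hg)
  have hpM : ∀ x : L, x ^ p ∈ (algebraMap M L).range := by
    intro x
    obtain ⟨a, ha⟩ := hp x
    exact ⟨algebraMap E M a, by rw [← ha, ← IsScalarTower.algebraMap_apply E M L]⟩
  have hr : ∀ y : L, y ∈ (algebraMap M L).range ↔ y ∈ M := fun y =>
    ⟨by rintro ⟨z, rfl⟩; exact z.2, fun h => ⟨⟨y, h⟩, rfl⟩⟩
  have hgM' : g ∉ (algebraMap M L).range := fun h => hgM ((hr g).1 h)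
  have htop : IntermediateField.adjoin M {g} = ⊤ := by
    rw [eq_top_iff]
    intro y _
    by_cases hy : y ∈ M
    · exact (IntermediateField.adjoin M {g}).algebraMap_mem ⟨y, hy⟩
    have hy' : y ∉ (algebraMap M L).range := fun h => hy ((hr y).1 h)
    have hgy : g ∈ IntermediateField.adjoin M {y} := by
      by_contra hcon
      have hle : M ≤ (IntermediateField.adjoin M {y}).restrictScalars E := fun z hz =>
        (IntermediateField.adjoin M {y}).algebraMap_mem ⟨z, hz⟩
      exact hy (hmax (y := (IntermediateField.adjoin M {y}).restrictScalars E) hcon hle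
        (IntermediateField.mem_adjoin_simple_self M y))
    have h1 := finrank_adjoin_simple_of_pow_char p hpM y hy'
    have h2 := finrank_adjoin_simple_of_pow_char p hpM g hgM'
    have := h1.2
    rw [IntermediateField.eq_of_le_of_finrank_eq
      (IntermediateField.adjoin_simple_le_iff.2 hgy) (h2.1.trans h1.1.symm)]
    exact IntermediateField.mem_adjoin_simple_self M y
  obtain ⟨D, hD⟩ := exists_derivation_ne_zero_of_adjoin_eq_top p hpM g hgM' htop
  exact ⟨D.restrictScalars E, hD⟩


/-- If the reduced monomials in the `F i` are linearly independent over `k ⊇ L ^ p`, then `F a` lies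
outside the field generated over `k` by the other `F b`, so some derivation kills those and not
`F a`. -/
theorem exists_derivation_of_linearIndependent {k L : Type*} [Field k] [Field L] [Algebra k L]
    (p : ℕ) [Fact p.Prime] [CharP L p]
    (hp : ∀ x : L, x ^ p ∈ (algebraMap k L).range) {m : ℕ} (F : Fin m → L)
    (hF : LinearIndependent k (fun e : Fin m → Fin p => ∏ i, F i ^ (e i : ℕ))) (a : Fin m) :
    ∃ D : Derivation k L L, (∀ b, b ≠ a → D (F b) = 0) ∧ D (F a) ≠ 0 := by
  have hp0 : p.Prime := Fact.out
  have hne : NeZero p := ⟨hp0.ne_zero⟩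
  -- The family `F` with `F a` dropped; the value `1` adds nothing to what it generates.
  set G : Fin m → L := Function.update F a 1 with hG
  have halg : ∀ x : L, IsAlgebraic k x := by
    intro x
    obtain ⟨c, hc⟩ := hp x
    refine IsIntegral.isAlgebraic ⟨_, Polynomial.monic_X_pow_sub_C c hp0.ne_zero, ?_⟩
    simp [hc]
  let E : IntermediateField k L := IntermediateField.adjoin k (Set.range G)
  have hspan : ∀ x ∈ E, x ∈ Submodule.span k
      ((fun e : Fin m → Fin p => ∏ i, F i ^ (e i : ℕ)) '' {e | e a = 0}) := by
    intro x hx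
    have hx1 : x ∈ E.toSubalgebra := hx
    rw [IntermediateField.adjoin_toSubalgebra_of_isAlgebraic (fun y _ => halg y),
      ← Subalgebra.mem_toSubmodule, Algebra.adjoin_eq_span] at hx1
    refine Submodule.span_le.2 ?_ hx1
    intro y hy
    obtain ⟨e, rfl⟩ := Submonoid.mem_closure_range_iff_of_fintype.1 hy
    obtain ⟨c, hc⟩ := hp (∏ i, G i ^ (e i / p))
    -- Exponents are reduced mod `p`, since `p`-th powers are scalars.
    have hsplit : ∏ i, G i ^ e i = c • ∏ i, G i ^ (e i % p) := by
      rw [Algebra.smul_def, hc, ← Finset.prod_pow, ← Finset.prod_mul_distrib]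
      refine Finset.prod_congr rfl fun i _ => ?_
      rw [← pow_mul, ← pow_add, Nat.div_add_mod']
    rw [hsplit]
    refine Submodule.smul_mem _ _ (Submodule.subset_span ?_)
    refine ⟨Function.update (fun i => ⟨e i % p, Nat.mod_lt _ hp0.pos⟩) a 0, by simp, ?_⟩
    refine Finset.prod_congr rfl fun i _ => ?_
    by_cases hi : i = a
    · subst hi; simp [hG]
    · simp [hG, hi]
  have hnot : F a ∉ (algebraMap E L).range := by
    rintro ⟨z, hz⟩
    have h1 := hspan (F a) (hz ▸ z.2)
    have h2 : F a = (fun e : Fin m → Fin p => ∏ i, F i ^ (e i : ℕ))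
        (Function.update (fun _ => 0) a ⟨1, hp0.one_lt⟩) := by
      simp only
      rw [Finset.prod_eq_single a] <;> simp +contextual
    rw [h2] at h1
    refine hF.notMem_span_image ?_ h1
    intro h
    have h' := congrArg Fin.val (show Function.update (fun _ => (0 : Fin p)) a ⟨1, hp0.one_lt⟩ a = 0
      from h)
    rw [Function.update_self] at h'
    exact one_ne_zero h'
  obtain ⟨D, hD⟩ := exists_derivation_ne_zero (E := E) p (fun x => by
    obtain ⟨c, hc⟩ := hp x
    exact ⟨algebraMap k E c, by rw [← hc, ← IsScalarTower.algebraMap_apply k E L]⟩) (F a) hnot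
  refine ⟨D.restrictScalars k, fun b hb => ?_, hD⟩
  have hmem : F b ∈ E := IntermediateField.subset_adjoin _ _ ⟨b, by simp [hG, hb]⟩
  exact D.map_algebraMap (⟨F b, hmem⟩ : E)

/-! ### Independence of the rows of the Jacobian matrix -/

theorem pow_char_mem_adjoin {K : Type*} [CommRing K] (p : ℕ) [Fact p.Prime] [CharP K p] {σ : Type*}
    (u : MvPolynomial σ K) :
    u ^ p ∈ Algebra.adjoin K (Set.range fun i : σ => (X i : MvPolynomial σ K) ^ p) := by
  induction u using MvPolynomial.induction_on with
  | C a => rw [← C_pow]; exact Subalgebra.algebraMap_mem _ _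
  | add u v hu hv => rw [add_pow_char]; exact add_mem hu hv
  | mul_X u i hu => rw [mul_pow]; exact mul_mem hu (Algebra.subset_adjoin ⟨i, rfl⟩)

/-- Chain rule for derivations of a polynomial ring. -/
theorem derivation_eq_sum_pderiv {K : Type*} [CommRing K] {n : ℕ} {A : Type*} [AddCommGroup A]
    [Module K A] [Module (MvPolynomial (Fin n) K) A] [IsScalarTower K (MvPolynomial (Fin n) K) A]
    (D : Derivation K (MvPolynomial (Fin n) K) A) (g : MvPolynomial (Fin n) K) :
    D g = ∑ i, pderiv i g • D (X i) := by
  induction g using MvPolynomial.induction_on with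
  | C a => simp
  | add u v hu hv => simp [hu, hv, add_smul, Finset.sum_add_distrib]
  | mul_X u j hu =>
    rw [D.leibniz, hu]
    have hX : ∀ i, pderiv i (u * X j) = u * Pi.single (M := fun _ => MvPolynomial (Fin n) K) i 1 j +
        X j * pderiv i u := fun i => by
      rw [Derivation.leibniz, pderiv_X, smul_eq_mul, smul_eq_mul]
    simp only [hX, add_smul, Finset.sum_add_distrib, Finset.smul_sum, mul_smul]
    congr 1
    rw [Finset.sum_eq_single j]
    · simp
    · intro b _ hb
      simp [hb.symm]
    · simp

/-- Transfer of `exists_derivation_of_linearIndependent` from the fraction fields `k` and `L` to the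
rings `B` and `R`. -/
theorem exists_derivation_of_pIndependent_aux {K B R k L : Type*} [CommRing K] [CommRing B] [CommRing R]
    [Field k] [Field L] [Algebra B R] [Algebra B k] [IsFractionRing B k] [Algebra R L]
    [IsFractionRing R L] [Algebra B L] [IsScalarTower B R L] [Algebra k L] [IsScalarTower B k L]
    [Algebra K B] [Algebra K R] [IsScalarTower K B R] [Algebra K L] [IsScalarTower K R L]
    (p : ℕ) [Fact p.Prime] [CharP R p] (hpow : ∀ u : R, u ^ p ∈ (algebraMap B R).range)
    {m : ℕ} (f : Fin m → R)
    (hind : LinearIndependent B (fun e : Fin m → Fin p => ∏ i, f i ^ (e i : ℕ))) (a : Fin m) :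
    ∃ D : Derivation K R L, (∀ b, b ≠ a → D (f b) = 0) ∧ D (f a) ≠ 0 := by
  have hchar : CharP L p := charP_of_injective_algebraMap (IsFractionRing.injective R L) p
  have hpR : ∀ u : R, algebraMap R L u ^ p ∈ (algebraMap k L).range := by
    intro u
    obtain ⟨b, hb⟩ := hpow u
    refine ⟨algebraMap B k b, ?_⟩
    rw [← IsScalarTower.algebraMap_apply B k L, IsScalarTower.algebraMap_apply B R L, hb, map_pow]
  have hpL : ∀ x : L, x ^ p ∈ (algebraMap k L).range := by
    intro x
    obtain ⟨u, v, -, rfl⟩ := IsFractionRing.div_surjective (A := R) x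
    obtain ⟨c, hc⟩ := hpR u
    obtain ⟨c', hc'⟩ := hpR v
    exact ⟨c / c', by rw [map_div₀, hc, hc', div_pow]⟩
  have hindL : LinearIndependent k
      (fun e : Fin m → Fin p => ∏ i, (algebraMap R L (f i)) ^ (e i : ℕ)) := by
    rw [← LinearIndependent.iff_fractionRing B k]
    have h := hind.map' (IsScalarTower.toAlgHom B R L).toLinearMap
      (LinearMap.ker_eq_bot.2 (IsFractionRing.injective R L))
    have hcomp : (fun e : Fin m → Fin p => ∏ i, (algebraMap R L (f i)) ^ (e i : ℕ)) =
        (IsScalarTower.toAlgHom B R L).toLinearMap ∘ fun e => ∏ i, f i ^ (e i : ℕ) := by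
      ext e
      simp
    rw [hcomp]
    exact h
  obtain ⟨D, hD, hDa⟩ := exists_derivation_of_linearIndependent p hpL _ hindL a
  have hKB : IsScalarTower K B L := IsScalarTower.of_algebraMap_eq fun x => by
    rw [IsScalarTower.algebraMap_apply K R L, IsScalarTower.algebraMap_apply K B R,
      ← IsScalarTower.algebraMap_apply B R L]
  exact ⟨((D.restrictScalars B).restrictScalars K).compAlgebraMap R, hD, hDa⟩

theorem exists_derivation_of_pIndependent {K B R : Type*} [CommRing K] [CommRing B] [IsDomain B] [CommRing R]
    [IsDomain R] [Algebra B R] [Algebra K B] [Algebra K R] [IsScalarTower K B R]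
    (hinj : Function.Injective (algebraMap B R))
    (p : ℕ) [Fact p.Prime] [CharP R p] (hpow : ∀ u : R, u ^ p ∈ (algebraMap B R).range)
    {m : ℕ} (f : Fin m → R)
    (hind : LinearIndependent B (fun e : Fin m → Fin p => ∏ i, f i ^ (e i : ℕ))) (a : Fin m) :
    ∃ D : Derivation K R (FractionRing R), (∀ b, b ≠ a → D (f b) = 0) ∧ D (f a) ≠ 0 := by
  have hfaith : FaithfulSMul B (FractionRing R) := by
    rw [faithfulSMul_iff_algebraMap_injective, IsScalarTower.algebraMap_eq B R (FractionRing R)]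
    exact (IsFractionRing.injective R (FractionRing R)).comp hinj
  let _ : Algebra (FractionRing B) (FractionRing R) := FractionRing.liftAlgebra B (FractionRing R)
  have _ : IsScalarTower B (FractionRing B) (FractionRing R) :=
    FractionRing.isScalarTower_liftAlgebra B (FractionRing R)
  exact exists_derivation_of_pIndependent_aux (k := FractionRing B) p hpow f hind a

/-- The rows of the Jacobian matrix of a `p`-independent family are linearly independent: pairing a
relation between the `df_a` with a derivation killing all `f_b` except `f_a` isolates the coefficient
of `df_a`. -/
theorem jacobian_rows_independent {K : Type*} [CommRing K] [IsDomain K]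
    (p : ℕ) [Fact p.Prime] [CharP K p] {m n : ℕ}
    (f : Fin m → MvPolynomial (Fin n) K)
    (hind : LinearIndependent
      ↥(Algebra.adjoin K
          (Set.range fun i : Fin n => (X i : MvPolynomial (Fin n) K) ^ p))
      (fun e : Fin m → Fin p => ∏ i, f i ^ (e i : ℕ)))
    (z : Fin m → MvPolynomial (Fin n) K)
    (hz : ∀ b, ∑ a, z a * pderiv b (f a) = 0) : z = 0 := by
  funext a
  obtain ⟨D, hD, hDa⟩ := exists_derivation_of_pIndependent (K := K) Subtype.val_injective p
    (fun u => ⟨⟨u ^ p, pow_char_mem_adjoin p u⟩, rfl⟩) f hind a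
  have hDz : ∑ c, z c • D (f c) = 0 := by
    simp_rw [fun c => derivation_eq_sum_pderiv D (f c), Finset.smul_sum, smul_smul]
    rw [Finset.sum_comm]
    simp_rw [← Finset.sum_smul, hz, zero_smul, Finset.sum_const_zero]
  have hsingle : ∑ c, z c • D (f c) = z a • D (f a) :=
    Finset.sum_eq_single a (fun c _ hc => by rw [hD c hc, smul_zero]) (by simp)
  rw [hsingle, Algebra.smul_def] at hDz
  have h0 := (mul_eq_zero.1 hDz).resolve_right hDa
  exact (map_eq_zero_iff _ (IsFractionRing.injective _ _)).1 h0

/-! ### Maximal minors of an `m × (m + 1)` matrix -/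

/-- The signed maximal minor of an `m × (m + 1)` matrix `J` obtained by deleting column `j`; it is
the cofactor of the `j`-th entry of a row appended below `J`. -/
def cofactor {R : Type*} [CommRing R] {m : ℕ} (J : Fin m → Fin (m + 1) → R) (j : Fin (m + 1)) : R :=
  (-1) ^ (m + (j : ℕ)) * Matrix.det (Matrix.of fun a b => J a (j.succAbove b))

theorem det_snoc_eq_sum {R : Type*} [CommRing R] {m : ℕ} (J : Fin m → Fin (m + 1) → R)
    (r : Fin (m + 1) → R) :
    Matrix.det (Matrix.of (Fin.snoc J r : Fin (m + 1) → Fin (m + 1) → R)) =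
      ∑ j, r j * cofactor J j := by
  rw [Matrix.det_succ_row _ (Fin.last m)]
  refine Finset.sum_congr rfl fun j _ => ?_
  have hsub : (Matrix.of (Fin.snoc J r : Fin (m + 1) → Fin (m + 1) → R)).submatrix
      (Fin.last m).succAbove j.succAbove = Matrix.of fun a b => J a (j.succAbove b) := by
    ext a b
    simp [Fin.succAbove_last]
  rw [hsub, cofactor]
  simp only [Matrix.of_apply, Fin.snoc_last, Fin.val_last]
  ring

theorem sum_mul_cofactor_eq_zero {R : Type*} [CommRing R] {m : ℕ} (J : Fin m → Fin (m + 1) → R)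
    (a : Fin m) : ∑ j, J a j * cofactor J j = 0 := by
  rw [← det_snoc_eq_sum]
  refine Matrix.det_zero_of_row_eq (i := a.castSucc) (j := Fin.last m) (Fin.castSucc_lt_last a).ne ?_
  ext b
  simp

/-- A matrix with independent rows has a nonzero maximal minor: delete a column `k` at which some
nonzero kernel vector of `J` does not vanish. -/
theorem exists_cofactor_ne_zero {R : Type*} [CommRing R] [IsDomain R] {m : ℕ}
    (J : Fin m → Fin (m + 1) → R)
    (hJ : ∀ z : Fin m → R, (∀ b, ∑ a, z a * J a b = 0) → z = 0) : ∃ k, cofactor J k ≠ 0 := by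
  obtain ⟨u, hu, hu0⟩ := Matrix.exists_mulVec_eq_zero_iff.2
    (show Matrix.det (Matrix.of (Fin.snoc J 0 : Fin (m + 1) → Fin (m + 1) → R)) = 0 by
      simp [det_snoc_eq_sum])
  have hJu : ∀ a, ∑ b, J a b * u b = 0 := fun a => by
    have := congrFun hu0 a.castSucc
    simpa [Matrix.mulVec, dotProduct] using this
  obtain ⟨k, hk⟩ := Function.ne_iff.1 hu
  refine ⟨k, fun hck => ?_⟩
  obtain ⟨v, hv, hv0⟩ := Matrix.exists_vecMul_eq_zero_iff.2
    (show Matrix.det (Matrix.of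
      (Fin.snoc J (Pi.single k 1) : Fin (m + 1) → Fin (m + 1) → R)) = 0 by
      rw [det_snoc_eq_sum, Finset.sum_eq_single k] <;> simp +contextual [hck])
  have hv1 : ∀ b, ∑ a : Fin m, v a.castSucc * J a b +
      v (Fin.last m) * (Pi.single k 1 : Fin (m + 1) → R) b = 0 := fun b => by
    have := congrFun hv0 b
    simpa only [Matrix.vecMul, dotProduct, Fin.sum_univ_castSucc, Matrix.of_apply,
      Fin.snoc_castSucc, Fin.snoc_last, Pi.zero_apply] using this
  have hlast : v (Fin.last m) = 0 := by
    have h1 : ∑ b, (∑ a : Fin m, v a.castSucc * J a b +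
        v (Fin.last m) * (Pi.single k 1 : Fin (m + 1) → R) b) * u b = 0 := by
      simp only [hv1, zero_mul, Finset.sum_const_zero]
    simp only [add_mul, Finset.sum_add_distrib, Finset.sum_mul] at h1
    rw [Finset.sum_comm] at h1
    simp only [mul_assoc, ← Finset.mul_sum, hJu, mul_zero, Finset.sum_const_zero, zero_add] at h1
    rw [Finset.sum_eq_single k (by simp +contextual) (by simp)] at h1
    simpa using (mul_eq_zero.1 (by simpa using h1)).resolve_right hk
  have hz := hJ (fun a => v a.castSucc) (fun b => by simpa [hlast] using hv1 b)
  apply hv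
  funext i
  refine Fin.lastCases hlast (fun a => congrFun hz a) i

/-- A kernel vector of `J` is proportional to the vector of cofactors. -/
theorem cofactor_mul_comm_of_kernel {R : Type*} [CommRing R] [IsDomain R] {m : ℕ}
    (J : Fin m → Fin (m + 1) → R) (v : Fin (m + 1) → R) (hv : ∀ a, ∑ b, J a b * v b = 0)
    (k : Fin (m + 1)) (hk : cofactor J k ≠ 0) (i : Fin (m + 1)) :
    cofactor J k * v i = v k * cofactor J i := by
  have hdet : Matrix.det (Matrix.of
      (Fin.snoc J (Pi.single k 1) : Fin (m + 1) → Fin (m + 1) → R)) ≠ 0 := by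
    rw [det_snoc_eq_sum, Finset.sum_eq_single k] <;> simp +contextual [hk]
  have hzero := Matrix.eq_zero_of_mulVec_eq_zero hdet
    (v := fun i => cofactor J k * v i - v k * cofactor J i) (by
      funext r
      refine Fin.lastCases ?_ (fun a => ?_) r
      · simp only [Matrix.mulVec, dotProduct, Matrix.of_apply, Fin.snoc_last, Pi.zero_apply]
        rw [Finset.sum_eq_single k (by simp +contextual) (by simp)]
        simp [mul_comm]
      · simp only [Matrix.mulVec, dotProduct, Matrix.of_apply, Fin.snoc_castSucc, Pi.zero_apply,
          mul_sub, mul_left_comm (J a _), Finset.sum_sub_distrib, ← Finset.mul_sum, hv,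
          sum_mul_cofactor_eq_zero, mul_zero, sub_zero])
  exact sub_eq_zero.1 (congrFun hzero i)

/-- A minor on an arbitrary choice `j` of columns is zero or, up to sign, a cofactor. -/
theorem dvd_minor_of_dvd_cofactor {R : Type*} [CommRing R] {m : ℕ}
    (J : Fin m → Fin (m + 1) → R) (q : R) (hq : ∀ j, q ∣ cofactor J j) (j : Fin m → Fin (m + 1)) :
    q ∣ Matrix.det (Matrix.of fun a b => J a (j b)) := by
  by_cases hj : Function.Injective j
  · have hns : ¬ Function.Surjective j := fun hs => by
      have := Fintype.card_le_of_surjective j hs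
      simp at this
    obtain ⟨i, hi⟩ := not_forall.1 hns
    have hex : ∀ b, ∃ c, i.succAbove c = j b := fun b =>
      Fin.exists_succAbove_eq (fun h => hi ⟨b, h⟩)
    choose σ hσ using hex
    have hσi : Function.Injective σ := fun b b' h => hj (by rw [← hσ, ← hσ, h])
    let e : Equiv.Perm (Fin m) := Equiv.ofBijective σ (Finite.injective_iff_bijective.1 hσi)
    have hM : (Matrix.of fun a b => J a (j b)) =
        (Matrix.of fun a b => J a (i.succAbove b)).submatrix id e := by
      ext a b
      simp [e, hσ]
    rw [hM, Matrix.det_permute']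
    refine Dvd.dvd.mul_left ?_ _
    have := hq i
    rw [cofactor] at this
    exact (IsUnit.dvd_mul_left ((isUnit_one.neg).pow _)).1 this
  · rw [Function.Injective] at hj
    push Not at hj
    obtain ⟨b, b', hbb, hne⟩ := hj
    rw [Matrix.det_zero_of_column_eq hne (fun a => by simp [hbb])]
    exact dvd_zero q

/-! ### Proportional vectors over a UFD -/

/-- Euclid's lemma for a family `w` with gcd `1`. -/
theorem dvd_of_dvd_mul_of_coprime {R ι : Type*} [CommRing R] [IsDomain R]
    [UniqueFactorizationMonoid R] [Fintype ι] (w : ι → R)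
    (hw : ∀ q, (∀ i, q ∣ w i) → IsUnit q) (a v : R) (h : ∀ i, a ∣ v * w i) : a ∣ v := by
  classical
  let _ : StrongNormalizationMonoid R := UniqueFactorizationMonoid.strongNormalizationMonoid
  let _ : StrongNormalizedGCDMonoid R := UniqueFactorizationMonoid.toStrongNormalizedGCDMonoid R
  have h1 : a ∣ Finset.univ.gcd fun i => v * w i := Finset.dvd_gcd fun i _ => h i
  rw [Finset.gcd_mul_left] at h1
  have hu : IsUnit (Finset.univ.gcd w) := hw _ fun i => Finset.gcd_dvd (Finset.mem_univ i)
  rw [hu.dvd_mul_right] at h1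
  exact dvd_normalize_iff.1 h1

/-- If `v` is proportional to a nonzero vector `w` and `F = gcd w`, then `F v = h w` with
`h = gcd v`: the vector `w / F` is primitive, so `v` is a multiple of it. -/
theorem exists_gcd_smul {R ι : Type*} [CommRing R] [IsDomain R]
    [UniqueFactorizationMonoid R] [Fintype ι] (w v : ι → R) (F : R)
    (hF₁ : ∀ i, F ∣ w i) (hF₂ : ∀ q, (∀ i, q ∣ w i) → q ∣ F)
    (k : ι) (hk : w k ≠ 0) (hprop : ∀ i, w k * v i = v k * w i) :
    ∃ h : R, ((∀ i, h ∣ v i) ∧ ∀ q, (∀ i, q ∣ v i) → q ∣ h) ∧ ∀ i, F * v i = h * w i := by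
  choose w' hw' using hF₁
  have hF0 : F ≠ 0 := by
    rintro rfl
    exact hk (by rw [hw' k, zero_mul])
  have hk' : w' k ≠ 0 := fun h0 => hk (by rw [hw' k, h0, mul_zero])
  have hcop : ∀ q, (∀ i, q ∣ w' i) → IsUnit q := by
    intro q hq
    have : F * q ∣ F * 1 := by
      rw [mul_one]
      exact hF₂ _ fun i => by rw [hw' i]; exact mul_dvd_mul_left F (hq i)
    exact isUnit_of_dvd_one ((mul_dvd_mul_iff_left hF0).1 this)
  have hprop' : ∀ i, w' k * v i = v k * w' i := fun i => mul_left_cancel₀ hF0 (by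
    have := hprop i
    rw [hw' k, hw' i] at this
    linear_combination this)
  obtain ⟨h, hh⟩ : w' k ∣ v k :=
    dvd_of_dvd_mul_of_coprime w' hcop _ _ fun i => ⟨v i, (hprop' i).symm⟩
  have hv : ∀ i, v i = h * w' i := fun i => mul_left_cancel₀ hk' (by
    rw [hprop' i, hh, mul_assoc])
  refine ⟨h, ⟨fun i => ⟨w' i, hv i⟩, fun q hq => ?_⟩, fun i => ?_⟩
  · refine dvd_of_dvd_mul_of_coprime w' hcop _ _ fun i => ?_
    rw [← hv i]
    exact hq i
  · rw [hv i, hw' i]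
    ring

/-- Corollary 1. `K` a UFD of characteristic `p > 0`,
`f₁,…,f_{n-1} ∈ K[x₁,…,xₙ]` (`n = m + 1`) `p`-independent over `B = K[x₁^p,…,xₙ^p]`,
`F̄ = dgcd(f₁,…,f_{n-1})` (a gcd of all the (n-1)×(n-1) Jacobian minors),
and `d` a `K`-derivation killing all the `fᵢ`.  Then `F̄·d = h·d_F` for some
polynomial `h` associated to `gcd(d(x₁),…,d(xₙ))`, i.e. `h` is itself a gcd of
the `d(xᵢ)`. -/
theorem corollary1_dgcd_factorization
    {K : Type*} [CommRing K] [IsDomain K] [UniqueFactorizationMonoid K]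
    (p : ℕ) [Fact p.Prime] [CharP K p] (m : ℕ)
    (f : Fin m → MvPolynomial (Fin (m + 1)) K)
    (hind : LinearIndependent
      ↥(Algebra.adjoin K
          (Set.range fun i : Fin (m + 1) => (X i : MvPolynomial (Fin (m + 1)) K) ^ p))
      (fun e : Fin m → Fin p => ∏ i, f i ^ (e i : ℕ)))
    (Fbar : MvPolynomial (Fin (m + 1)) K)
    (hFbar₁ : ∀ j : Fin m → Fin (m + 1),
      Fbar ∣ Matrix.det (Matrix.of fun a b => pderiv (j b) (f a)))
    (hFbar₂ : ∀ q : MvPolynomial (Fin (m + 1)) K,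
      (∀ j : Fin m → Fin (m + 1),
        q ∣ Matrix.det (Matrix.of fun a b => pderiv (j b) (f a))) → q ∣ Fbar)
    (d : Derivation K (MvPolynomial (Fin (m + 1)) K) (MvPolynomial (Fin (m + 1)) K))
    (hd : ∀ i, d (f i) = 0) :
    ∃ h : MvPolynomial (Fin (m + 1)) K,
      ((∀ i, h ∣ d (X i)) ∧
        ∀ q : MvPolynomial (Fin (m + 1)) K, (∀ i, q ∣ d (X i)) → q ∣ h) ∧
      ∀ g, Fbar * d g =
        h * Matrix.det
          (Matrix.of (Fin.snoc (fun a b => pderiv b (f a)) (fun b => pderiv b g))) := by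
  set J : Fin m → Fin (m + 1) → MvPolynomial (Fin (m + 1)) K := fun a b => pderiv b (f a) with hJ
  have hdsum : ∀ g, d g = ∑ i, pderiv i g * d (X i) := fun g => by
    simpa only [smul_eq_mul] using derivation_eq_sum_pderiv d g
  obtain ⟨k, hk⟩ := exists_cofactor_ne_zero J (jacobian_rows_independent p f hind)
  obtain ⟨h, hgcd, hh⟩ := exists_gcd_smul (cofactor J) (fun i => d (X i)) Fbar
    (fun i => Dvd.dvd.mul_left (hFbar₁ i.succAbove) _)
    (fun q hq => hFbar₂ q fun j => dvd_minor_of_dvd_cofactor J q hq j) k hk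
    (cofactor_mul_comm_of_kernel J _ (fun a => by rw [← hd a, hdsum (f a)]) k hk)
  refine ⟨h, hgcd, fun g => ?_⟩
  rw [det_snoc_eq_sum J, hdsum g, Finset.mul_sum, Finset.mul_sum]
  refine Finset.sum_congr rfl fun i _ => ?_
  linear_combination pderiv i g * hh i
end

section
/- Let L be a field of characteristic p > 0. Assume that f_1, …, f_{n−1} ∈ L(x_1, …, x_n) are p-independent over L(x_1^p, …, x_n^p), and let g_1, …, g_{n−1} ∈ L(x_1, …, x_n) satisfy d_F(g_i) = 0 for all i, where F = (f_1, …, f_{n−1}). Then d_G = c·d_F for some c ∈ L(x_1, …, x_n) with d_F(c) = 0, where G = (g_1, …, g_{n−1}). -/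
open MvPolynomial

/-!
Put `M = L(x₁^p, …, xₙ^p)` with `n = m + 1`, and `K = M(f₁, …, f_m)`. Every derivation `δ b` kills
`M`, so on `M(h₁, …, h_k)` there is a chain rule `δ b z = ∑ j, a j * δ b (h j)` with coefficients
`a j` in `M(h₁, …, h_k)` that do not depend on `b` (`chain_rule`).

The point is that `K` contains all constants of the Jacobian derivation `d_F`
(`mem_of_det_eq_zero`). Since `[F : M] ≤ p ^ n` (`span_monomials`) and `p`-independence gives
`[K : M] ≥ p ^ m`, one has `[F : K] ≤ p`. If `t ∉ K`, then `t ^ p ∈ M` forces `[K(t) : K] = p`, so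
`F = M(f₁, …, f_m, t)`. The chain rule applied to the variables `xᵢ` then gives a left inverse of
the Jacobian matrix of `(f₁, …, f_m, t)`, so `d_F t ≠ 0`.

Hence all `g i` lie in `K`, the chain rule writes the Jacobian matrix of `g` as `A` times that of
`f` with `A` over `K`, and `d_G = det A • d_F`. Finally `det A ∈ K`, and `d_F` vanishes on `K` by
the chain rule (`det_eq_zero_of_mem`).
-/

set_option linter.unusedSectionVars false

namespace JacobianConstants

/-! ### Chain rule and Jacobian determinants -/

section ChainRule

variable {L F : Type*} [Field L] [Field F] [Algebra L F]

/-- Chain rule: the coefficients expressing `D z` through the `D (h j)` are the same for all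
derivations `D` that vanish on `M`. -/
theorem chain_rule (M : IntermediateField L F) {k : ℕ} (h : Fin k → F) (z : F)
    (hz : z ∈ IntermediateField.adjoin M (Set.range h)) :
    ∃ a : Fin k → F, (∀ j, a j ∈ IntermediateField.adjoin M (Set.range h)) ∧
      ∀ D : Derivation L F F, (∀ y ∈ M, D y = 0) → D z = ∑ j, a j * D (h j) := by
  induction hz using IntermediateField.adjoin_induction with
  | mem x hx =>
    obtain ⟨i, rfl⟩ := hx
    refine ⟨Pi.single i 1, fun j => ?_, fun D _ => ?_⟩
    · by_cases hj : j = i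
      · subst hj; simp [one_mem]
      · simp [hj, zero_mem]
    · simp [Pi.single_apply]
  | algebraMap x =>
    exact ⟨0, fun j => zero_mem _, fun D hD => by simpa using hD _ x.2⟩
  | add x y hx hy ihx ihy =>
    obtain ⟨a, ha, ha'⟩ := ihx
    obtain ⟨b, hb, hb'⟩ := ihy
    refine ⟨a + b, fun j => add_mem (ha j) (hb j), fun D hD => ?_⟩
    simp [ha' D hD, hb' D hD, add_mul, Finset.sum_add_distrib]
  | inv x hx ihx =>
    obtain ⟨a, ha, ha'⟩ := ihx
    refine ⟨fun j => -(x⁻¹ ^ 2) * a j,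
      fun j => mul_mem (neg_mem (pow_mem (inv_mem hx) 2)) (ha j), fun D hD => ?_⟩
    simp [Derivation.leibniz_inv, ha' D hD, Finset.mul_sum, mul_assoc]
  | mul x y hx hy ihx ihy =>
    obtain ⟨a, ha, ha'⟩ := ihx
    obtain ⟨b, hb, hb'⟩ := ihy
    refine ⟨fun j => x * b j + y * a j,
      fun j => add_mem (mul_mem hx (hb j)) (mul_mem hy (ha j)), fun D hD => ?_⟩
    simp [ha' D hD, hb' D hD, add_mul, Finset.sum_add_distrib, Finset.mul_sum, mul_assoc]

theorem jacobian_snoc {m : ℕ} (δ : Fin (m + 1) → Derivation L F F) (f : Fin m → F) (t : F) :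
    (Matrix.of (Fin.snoc (fun a b => δ b (f a)) (fun b => δ b t)) :
      Matrix (Fin (m + 1)) (Fin (m + 1)) F) =
    Matrix.of fun a b => δ b ((Fin.snoc f t : Fin (m + 1) → F) a) := by
  ext a b
  refine Fin.lastCases ?_ (fun a => ?_) a <;> simp

theorem det_eq_zero_of_mem (M : IntermediateField L F) {m : ℕ}
    (δ : Fin (m + 1) → Derivation L F F) (hM : ∀ b, ∀ y ∈ M, δ b y = 0)
    (f : Fin m → F) (z : F) (hz : z ∈ IntermediateField.adjoin M (Set.range f)) :
    Matrix.det (Matrix.of (Fin.snoc (fun a b => δ b (f a)) (fun b => δ b z)) :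
      Matrix (Fin (m + 1)) (Fin (m + 1)) F) = 0 := by
  obtain ⟨a, -, ha⟩ := chain_rule M f z hz
  rw [← Matrix.exists_vecMul_eq_zero_iff]
  refine ⟨Fin.snoc a (-1), fun h0 => ?_, ?_⟩
  · simpa using congrFun h0 (Fin.last m)
  · ext b
    simp [Matrix.vecMul, dotProduct, Fin.sum_univ_castSucc, ha (δ b) (hM b)]

/-- Multiplying all rows but the last by `A` multiplies the determinant by `det A`. -/
theorem det_snoc_mul {m : ℕ} (A : Matrix (Fin m) (Fin m) F)
    (u v : Fin m → Fin (m + 1) → F) (w : Fin (m + 1) → F)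
    (h : ∀ i b, v i b = ∑ j, A i j * u j b) :
    Matrix.det (Matrix.of (Fin.snoc v w) : Matrix (Fin (m + 1)) (Fin (m + 1)) F) =
      A.det * Matrix.det (Matrix.of (Fin.snoc u w) : Matrix (Fin (m + 1)) (Fin (m + 1)) F) := by
  let B : Matrix (Fin (m + 1)) (Fin (m + 1)) F :=
    Matrix.of (Fin.snoc (fun i => Fin.snoc (A i) 0) (Fin.snoc 0 1))
  have hB : B.det = A.det := by
    rw [Matrix.det_succ_row B (Fin.last m), Fin.sum_univ_castSucc]
    have : B.submatrix (Fin.last m).succAbove (Fin.last m).succAbove = A := by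
      ext i j
      simp [B]
    rw [this]
    simp [B, ← two_mul]
  rw [← hB, ← Matrix.det_mul]
  congr 1
  ext a b
  refine Fin.lastCases ?_ (fun a => ?_) a
  · simp [B, Matrix.mul_apply, Fin.sum_univ_castSucc]
  · simp [B, Matrix.mul_apply, Fin.sum_univ_castSucc, h]

end ChainRule

/-! ### The degree of `L(x₁, …, xₙ)` over `L(x₁^p, …, xₙ^p)` -/

section Degree

theorem charP_field {L : Type*} [Field L] (p : ℕ) [CharP L p] (F : Type*) [Field F]
    [Algebra L F] : CharP F p :=
  charP_of_injective_algebraMap (algebraMap L F).injective p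

variable {L : Type*} [Field L] (p : ℕ) [Fact p.Prime] [CharP L p] {n : ℕ}
  (F : Type*) [Field F] [Algebra (MvPolynomial (Fin n) L) F]
  [IsFractionRing (MvPolynomial (Fin n) L) F]
  [Algebra L F] [IsScalarTower L (MvPolynomial (Fin n) L) F]

/-- The subfield `L(x₁^p, …, xₙ^p)` of `L(x₁, …, xₙ)`. -/
abbrev powField : IntermediateField L F :=
  IntermediateField.adjoin L
    (Set.range fun i : Fin n => algebraMap (MvPolynomial (Fin n) L) F (X i) ^ p)

theorem X_pow_mem (i : Fin n) : algebraMap (MvPolynomial (Fin n) L) F (X i) ^ p ∈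
    powField (L := L) (n := n) p F :=
  IntermediateField.subset_adjoin _ _ ⟨i, rfl⟩

theorem pow_mem_powField (z : F) : z ^ p ∈ powField (L := L) (n := n) p F := by
  have := charP_field (L := L) p F
  have hpoly : ∀ q : MvPolynomial (Fin n) L,
      algebraMap (MvPolynomial (Fin n) L) F q ^ p ∈ powField (L := L) (n := n) p F := by
    intro q
    induction q using MvPolynomial.induction_on with
    | C a =>
      rw [← MvPolynomial.algebraMap_eq, ← IsScalarTower.algebraMap_apply]
      exact pow_mem (IntermediateField.algebraMap_mem _ a) p
    | add q r hq hr =>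
      rw [map_add, add_pow_char]
      exact add_mem hq hr
    | mul_X q i hq =>
      rw [map_mul, mul_pow]
      exact mul_mem hq (X_pow_mem p F i)
  obtain ⟨a, b, -, rfl⟩ := IsFractionRing.div_surjective (A := MvPolynomial (Fin n) L) z
  rw [div_pow]
  exact div_mem (hpoly a) (hpoly b)

/-- The `p ^ n` monomials with all exponents below `p` span `L(x₁, …, xₙ)` over
`L(x₁^p, …, xₙ^p)`. -/
theorem span_monomials :
    Submodule.span (powField (L := L) (n := n) p F) (Set.range fun e : Fin n → Fin p =>
      ∏ i, algebraMap (MvPolynomial (Fin n) L) F (X i) ^ (e i : ℕ)) = ⊤ := by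
  have hp : 0 < p := (Fact.out : p.Prime).pos
  set S := Submodule.span (powField (L := L) (n := n) p F) (Set.range fun e : Fin n → Fin p =>
      ∏ i, algebraMap (MvPolynomial (Fin n) L) F (X i) ^ (e i : ℕ)) with hS
  have hsmul : ∀ c ∈ powField (L := L) (n := n) p F, ∀ z ∈ S, c * z ∈ S :=
    fun c hc z hz => S.smul_mem ⟨c, hc⟩ hz
  have hpoly : ∀ q : MvPolynomial (Fin n) L, algebraMap (MvPolynomial (Fin n) L) F q ∈ S := by
    intro q
    induction q using MvPolynomial.induction_on' with
    | monomial e a =>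
      have h1 : algebraMap (MvPolynomial (Fin n) L) F (monomial e a) =
          (algebraMap L F a * ∏ i, (algebraMap (MvPolynomial (Fin n) L) F (X i) ^ p) ^ (e i / p)) *
            ∏ i, algebraMap (MvPolynomial (Fin n) L) F (X i) ^ (e i % p) := by
        rw [mul_assoc, ← Finset.prod_mul_distrib, MvPolynomial.monomial_eq, map_mul,
          ← MvPolynomial.algebraMap_eq, ← IsScalarTower.algebraMap_apply,
          Finsupp.prod_fintype _ _ (by simp), map_prod]
        congr 1
        refine Finset.prod_congr rfl fun i _ => ?_
        rw [← pow_mul, ← pow_add, Nat.div_add_mod, map_pow]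
      rw [h1]
      refine hsmul _ (mul_mem (IntermediateField.algebraMap_mem _ a)
        (prod_mem fun i _ => pow_mem (X_pow_mem p F i) _)) _ ?_
      exact Submodule.subset_span ⟨fun i => ⟨e i % p, Nat.mod_lt _ hp⟩, rfl⟩
    | add q r hq hr =>
      rw [map_add]
      exact add_mem hq hr
  rw [eq_top_iff]
  rintro z -
  obtain ⟨a, b, hb, rfl⟩ := IsFractionRing.div_surjective (A := MvPolynomial (Fin n) L) z
  have hb0 : algebraMap (MvPolynomial (Fin n) L) F b ≠ 0 :=
    IsFractionRing.to_map_ne_zero_of_mem_nonZeroDivisors hb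
  -- Clear the denominator inside the base field: `a / b = (b ^ p)⁻¹ * (a * b ^ (p - 1))`.
  have h2 : algebraMap (MvPolynomial (Fin n) L) F a / algebraMap (MvPolynomial (Fin n) L) F b =
      (algebraMap (MvPolynomial (Fin n) L) F b ^ p)⁻¹ *
        algebraMap (MvPolynomial (Fin n) L) F (a * b ^ (p - 1)) := by
    obtain ⟨k, rfl⟩ : ∃ k, p = k + 1 := ⟨p - 1, by omega⟩
    rw [map_mul, map_pow, Nat.add_sub_cancel]
    field_simp
    ring
  rw [h2]
  exact hsmul _ (inv_mem (pow_mem_powField p F _)) _ (hpoly _)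

theorem finite_powField : Module.Finite (powField (L := L) (n := n) p F) F :=
  ⟨(Submodule.fg_def).2 ⟨_, Set.finite_range _, span_monomials p F⟩⟩

theorem finrank_le : Module.finrank (powField (L := L) (n := n) p F) F ≤ p ^ n := by
  have h := finrank_range_le_card (R := powField (L := L) (n := n) p F)
    (fun e : Fin n → Fin p => ∏ i, algebraMap (MvPolynomial (Fin n) L) F (X i) ^ (e i : ℕ))
  rw [Set.finrank, span_monomials, finrank_top] at h
  simpa using h

end Degree

/-! ### Constants of the Jacobian derivation -/

section Constants

variable {L : Type*} [Field L] (p : ℕ) [Fact p.Prime] [CharP L p] {m : ℕ}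
  (F : Type*) [Field F] [Algebra (MvPolynomial (Fin (m + 1)) L) F]
  [IsFractionRing (MvPolynomial (Fin (m + 1)) L) F]
  [Algebra L F] [IsScalarTower L (MvPolynomial (Fin (m + 1)) L) F]

/-- Adjoining any element outside `M(f₁, …, f_m)` to that field gives all of `F`, because
`[F : M(f₁, …, f_m)] ≤ p` and the element has degree `p`. -/
theorem adjoin_snoc_eq_top (f : Fin m → F)
    (hind : LinearIndependent (powField (L := L) (n := m + 1) p F)
      (fun e : Fin m → Fin p => ∏ i, f i ^ (e i : ℕ))) (t : F)
    (ht : t ∉ IntermediateField.adjoin (powField (L := L) (n := m + 1) p F) (Set.range f)) :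
    IntermediateField.adjoin (powField (L := L) (n := m + 1) p F)
      (Set.range (Fin.snoc f t : Fin (m + 1) → F)) = ⊤ := by
  have hpp : p.Prime := Fact.out
  have := finite_powField (L := L) (n := m + 1) p F
  have := charP_field (L := L) p F
  set M := powField (L := L) (n := m + 1) p F with hM
  set K := IntermediateField.adjoin M (Set.range f) with hK
  have : Module.Finite K F := Module.Finite.of_restrictScalars_finite M K F
  have hMK : p ^ m ≤ Module.finrank M K := by
    have hf : ∀ i, f i ∈ K := fun i => IntermediateField.subset_adjoin _ _ ⟨i, rfl⟩
    have h1 : LinearIndependent M (fun e : Fin m → Fin p => ∏ i, (⟨f i, hf i⟩ : K) ^ (e i : ℕ)) := by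
      refine LinearIndependent.of_comp K.val.toLinearMap ?_
      have h2 : (K.val.toLinearMap ∘ fun e : Fin m → Fin p => ∏ i, (⟨f i, hf i⟩ : K) ^ (e i : ℕ)) =
          fun e => ∏ i, f i ^ (e i : ℕ) := by
        ext e
        simp
      rw [h2]
      exact hind
    simpa using h1.fintype_card_le_finrank
  have hKF : Module.finrank K F ≤ p := by
    have h1 : Module.finrank M K * Module.finrank K F = Module.finrank M F :=
      Module.finrank_mul_finrank M K F
    have h2 : Module.finrank M F ≤ p ^ (m + 1) := finrank_le p F
    have h3 : p ^ m * Module.finrank K F ≤ p ^ m * p := by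
      rw [← pow_succ]
      exact (Nat.mul_le_mul_right _ hMK).trans (h1.trans_le h2)
    exact Nat.le_of_mul_le_mul_left h3 (pow_pos hpp.pos m)
  have htp : t ^ p ∈ K := K.algebraMap_mem ⟨t ^ p, pow_mem_powField p F t⟩
  have hirr : Irreducible (Polynomial.X ^ p - Polynomial.C (⟨t ^ p, htp⟩ : K)) := by
    refine X_pow_sub_C_irreducible_of_prime hpp fun b hb => ht ?_
    have h1 : (b : F) ^ p = t ^ p := congrArg Subtype.val hb
    rw [← frobenius_inj F p h1]
    exact b.2
  have hmin : minpoly K t = Polynomial.X ^ p - Polynomial.C (⟨t ^ p, htp⟩ : K) :=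
    (minpoly.eq_of_irreducible_of_monic hirr
      (by simp only [map_sub, map_pow, Polynomial.aeval_X, Polynomial.aeval_C]; exact sub_self _)
      (Polynomial.monic_X_pow_sub_C _ hpp.ne_zero)).symm
  have hdeg : Module.finrank K (IntermediateField.adjoin K {t}) = p := by
    rw [IntermediateField.adjoin.finrank (Algebra.IsIntegral.isIntegral t), hmin,
      Polynomial.natDegree_X_pow_sub_C]
  have htop : IntermediateField.adjoin K {t} = ⊤ := by
    refine IntermediateField.eq_of_le_of_finrank_le le_top ?_
    rw [hdeg, IntermediateField.finrank_top']
    exact hKF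
  have hrange : Set.range (Fin.snoc f t : Fin (m + 1) → F) = Set.range f ∪ {t} := by
    rw [Fin.range_snoc, Set.union_singleton]
  rw [hrange, ← IntermediateField.adjoin_adjoin_left, htop, IntermediateField.restrictScalars_top]

theorem deriv_powField (D : Derivation L F F) :
    ∀ y ∈ powField (L := L) (n := m + 1) p F, D y = 0 := by
  have := charP_field (L := L) p F
  intro y hy
  induction hy using IntermediateField.adjoin_induction with
  | mem x hx =>
    obtain ⟨i, rfl⟩ := hx
    simp [Derivation.leibniz_pow]
  | algebraMap x => simp
  | add x y _ _ hx hy => simp [hx, hy]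
  | inv x _ hx => simp [Derivation.leibniz_inv, hx]
  | mul x y _ _ hx hy => simp [hx, hy]

/-- The constants of the Jacobian derivation `d_F` lie in `L(x₁^p, …, xₙ^p, f₁, …, f_m)`. -/
theorem mem_of_det_eq_zero (δ : Fin (m + 1) → Derivation L F F)
    (hδ : ∀ (i : Fin (m + 1)) (q : MvPolynomial (Fin (m + 1)) L),
      δ i (algebraMap (MvPolynomial (Fin (m + 1)) L) F q) =
        algebraMap (MvPolynomial (Fin (m + 1)) L) F (pderiv i q))
    (f : Fin m → F)
    (hind : LinearIndependent (powField (L := L) (n := m + 1) p F)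
      (fun e : Fin m → Fin p => ∏ i, f i ^ (e i : ℕ))) (t : F)
    (ht : Matrix.det (Matrix.of (Fin.snoc (fun a b => δ b (f a)) (fun b => δ b t)) :
      Matrix (Fin (m + 1)) (Fin (m + 1)) F) = 0) :
    t ∈ IntermediateField.adjoin (powField (L := L) (n := m + 1) p F) (Set.range f) := by
  by_contra hnot
  have htop := adjoin_snoc_eq_top p F f hind t hnot
  have hx := fun i : Fin (m + 1) => chain_rule (powField (L := L) (n := m + 1) p F)
    (Fin.snoc f t : Fin (m + 1) → F) (algebraMap (MvPolynomial (Fin (m + 1)) L) F (X i))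
    (by rw [htop]; trivial)
  choose a _ ha using hx
  rw [jacobian_snoc] at ht
  have h1 : (Matrix.of a) * (Matrix.of fun c b => δ b ((Fin.snoc f t : Fin (m + 1) → F) c)) = 1 := by
    ext i b
    have h2 := ha i (δ b) (deriv_powField p F (δ b))
    rw [hδ, pderiv_X] at h2
    rw [Matrix.mul_apply]
    simp only [Matrix.of_apply]
    rw [← h2, Matrix.one_apply, Pi.single_apply]
    split_ifs <;> simp_all
  have h3 := congrArg Matrix.det h1
  rw [Matrix.det_mul, ht] at h3
  simp at h3

end Constants

end JacobianConstants

open JacobianConstants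

/-- Corollary 2. In the fraction field `F` of `L[x₁,…,xₙ]` (`n = m+1`),
with `δ i` the extension of `∂/∂xᵢ`, if `f₁,…,f_{n-1}` are `p`-independent over
`L(x₁^p,…,xₙ^p)` and `g₁,…,g_{n-1}` are constants of the Jacobian derivation `d_F`,
then `d_G = c·d_F` for some constant `c` of `d_F`. -/
theorem corollary2_jacobian_constants
    {L : Type*} [Field L] (p : ℕ) [Fact p.Prime] [CharP L p] (m : ℕ)
    (F : Type*) [Field F] [Algebra (MvPolynomial (Fin (m + 1)) L) F]
    [IsFractionRing (MvPolynomial (Fin (m + 1)) L) F]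
    [Algebra L F] [IsScalarTower L (MvPolynomial (Fin (m + 1)) L) F]
    (δ : Fin (m + 1) → Derivation L F F)
    (hδ : ∀ (i : Fin (m + 1)) (q : MvPolynomial (Fin (m + 1)) L),
      δ i (algebraMap (MvPolynomial (Fin (m + 1)) L) F q) =
        algebraMap (MvPolynomial (Fin (m + 1)) L) F (pderiv i q))
    (f : Fin m → F)
    (hind : LinearIndependent
      ↥(IntermediateField.adjoin L
          (Set.range fun i : Fin (m + 1) =>
            algebraMap (MvPolynomial (Fin (m + 1)) L) F (X i) ^ p))
      (fun e : Fin m → Fin p => ∏ i, f i ^ (e i : ℕ)))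
    (g : Fin m → F)
    (hg : ∀ i, Matrix.det
      (Matrix.of (Fin.snoc (fun a b => δ b (f a)) (fun b => δ b (g i)))) = 0) :
    ∃ c : F,
      Matrix.det (Matrix.of (Fin.snoc (fun a b => δ b (f a)) (fun b => δ b c))) = 0 ∧
      ∀ q : F,
        Matrix.det (Matrix.of (Fin.snoc (fun a b => δ b (g a)) (fun b => δ b q))) =
          c * Matrix.det (Matrix.of (Fin.snoc (fun a b => δ b (f a)) (fun b => δ b q))) := by
  have hM := fun b => deriv_powField (L := L) (m := m) p F (δ b)
  have hgK := fun i => mem_of_det_eq_zero p F δ hδ f hind (g i) (hg i)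
  choose a haK ha using fun i => chain_rule _ f (g i) (hgK i)
  refine ⟨(Matrix.of a).det, det_eq_zero_of_mem _ δ hM f _ ?_, fun q => ?_⟩
  · rw [Matrix.det_apply]
    exact sum_mem fun σ _ => zsmul_mem (prod_mem fun i _ => haK _ _) _
  · exact det_snoc_mul (Matrix.of a) _ _ _ fun i b => ha i (δ b) (hM b)
end

section
/- Let K be a unique factorization domain of characteristic p > 0 and let d be a nonzero K-derivation of K[x_1, …, x_n]. If f_1, …, f_{n−1} ∈ K[x_1, …, x_n]^d are polynomials such that dgcd(f_1, …, f_{n−1}) is a unit, then f_1, …, f_{n−1} form a p-basis of the ring of constants K[x_1, …, x_n]^d over K[x_1^p, …, x_n^p]. -/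
/-!
Write `A = K[x₁, …, xₙ]`, `B = K[x₁^p, …, xₙ^p]` and call a monomial in the `f i` reduced if its
exponents are less than `p`. Every `K`-derivation of `A` is `B`-linear. If `J` is the Jacobian minor
of `f` for some choice of variables, the adjugate matrix provides `B`-linear derivations `D i` with
`D i (f k) = δ i k * J`. Differentiating a relation between reduced monomials gives the main tool
`coeff_mem_of_aeval_mem`: if `J` is a nonzerodivisor modulo an ideal `N` stable under the `D i`, a
`B`-combination of reduced monomials lies in `N` only if its coefficients do. With `N = 0` and
some nonzero minor this is the linear independence.

For spanning, choose a nonzero minor `J` and a variable `x_l` not used in it. The family `f, x_l`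
has the same Jacobian determinant, so its `p ^ n` reduced monomials are independent in the
`B`-module `A`, which is generated by `p ^ n` elements. So every `g` has a multiple
`b g`, `b ≠ 0`, that is a combination of them. If `d g = 0`, applying `d` shows that `x_l` does not
occur in it (`exists_smul_mem_of_constant`).

It remains to cancel `b` (`mem_span_of_smul_mem`). As `B` is a UFD, it is enough to cancel a prime
`q` of `B`. A prime factor of `q` in `A` does not divide all the minors, so some minor `J` has
`q ∤ J ^ p`. As `J ^ p ∈ B` and `A` is free over `B`, this `J` is a nonzerodivisor modulo `q A`, and
the main tool with `N = q A` shows that `q` divides all the coefficients.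
-/

open MvPolynomial

/-! ### Reduced polynomials and derivations -/

section General

variable {B A ι : Type*} [CommRing B] [CommRing A] [Algebra B A]

/-- A polynomial all of whose exponents are `< p`. The elements of the `B`-span of the products
`∏ i, f i ^ e i` with `0 ≤ e i < p` are the values at `f` of reduced polynomials. -/
def ReducedPoly (p : ℕ) (P : MvPolynomial ι B) : Prop :=
  ∀ s ∈ P.support, ∀ i, s i < p

lemma ReducedPoly.pderiv {p : ℕ} {P : MvPolynomial ι B} (hP : ReducedPoly p P) (i : ι) :
    ReducedPoly p (MvPolynomial.pderiv i P) := by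
  intro s hs j
  rw [mem_support_iff, coeff_pderiv] at hs
  have h := hP (s + Finsupp.single i 1) (by
    rw [mem_support_iff]; intro h0; exact hs (by rw [h0, zero_mul])) j
  simp only [Finsupp.add_apply] at h
  omega

/-- The reduced polynomial with prescribed coefficients. -/
noncomputable def reducedOf [Fintype ι] [DecidableEq ι] (p : ℕ) (b : (ι → Fin p) → B) :
    MvPolynomial ι B :=
  ∑ e : ι → Fin p, monomial (Finsupp.equivFunOnFinite.symm fun i => (e i : ℕ)) (b e)

lemma coeff_reducedOf [Fintype ι] [DecidableEq ι] (p : ℕ) (b : (ι → Fin p) → B)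
    (e : ι → Fin p) :
    coeff (Finsupp.equivFunOnFinite.symm fun i => (e i : ℕ)) (reducedOf p b) = b e := by
  rw [reducedOf, coeff_sum, Finset.sum_eq_single e]
  · simp
  · intro e' _ hne
    rw [coeff_monomial, if_neg]
    intro h
    apply hne
    funext i
    have := DFunLike.congr_fun h i
    exact Fin.ext (by simpa using this)
  · simp

lemma reducedPoly_reducedOf [Fintype ι] [DecidableEq ι] (p : ℕ) (b : (ι → Fin p) → B) :
    ReducedPoly p (reducedOf p b) := by
  intro s hs i
  have := support_sum hs
  rw [Finset.mem_biUnion] at this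
  obtain ⟨e, -, he⟩ := this
  have := support_monomial_subset he
  rw [Finset.mem_singleton] at this
  subst this
  simp

lemma aeval_reducedOf [Fintype ι] [DecidableEq ι] (p : ℕ) (b : (ι → Fin p) → B) (f : ι → A) :
    aeval f (reducedOf p b) = ∑ e, b e • ∏ i, f i ^ (e i : ℕ) := by
  rw [reducedOf, map_sum]
  refine Finset.sum_congr rfl fun e _ => ?_
  rw [aeval_monomial, Algebra.smul_def, Finsupp.prod_fintype _ _ (by simp)]
  simp

lemma mem_span_iff_reduced [Fintype ι] [DecidableEq ι] (p : ℕ) (f : ι → A) (g : A) :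
    g ∈ Submodule.span B (Set.range fun e : ι → Fin p => ∏ i, f i ^ (e i : ℕ)) ↔
      ∃ P : MvPolynomial ι B, ReducedPoly p P ∧ aeval f P = g := by
  constructor
  · intro h
    obtain ⟨b, rfl⟩ := (Submodule.mem_span_range_iff_exists_fun B).1 h
    exact ⟨reducedOf p b, reducedPoly_reducedOf p b, aeval_reducedOf p b f⟩
  · rintro ⟨P, hP, rfl⟩
    rw [aeval_def, eval₂_eq']
    refine Submodule.sum_mem _ fun s hs => ?_
    rw [← Algebra.smul_def]
    exact Submodule.smul_mem _ _ (Submodule.subset_span ⟨fun i => ⟨s i, hP s hs i⟩, rfl⟩)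

lemma linearIndependent_of_reduced [Fintype ι] [DecidableEq ι] (p : ℕ) (f : ι → A)
    (h : ∀ P : MvPolynomial ι B, ReducedPoly p P → aeval f P = 0 → P = 0) :
    LinearIndependent B (fun e : ι → Fin p => ∏ i, f i ^ (e i : ℕ)) := by
  rw [Fintype.linearIndependent_iff]
  intro b hb e
  rw [← aeval_reducedOf] at hb
  rw [← coeff_reducedOf p b e, h _ (reducedPoly_reducedOf p b) hb, coeff_zero]

lemma derivation_aeval {K : Type*} [CommRing K] [Algebra K A] [DecidableEq ι]
    (D : Derivation K A A) (hD : ∀ b : B, D (algebraMap B A b) = 0) (f : ι → A) (i : ι) (c : A)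
    (hf : ∀ j, D (f j) = if j = i then c else 0) (P : MvPolynomial ι B) :
    D (aeval f P) = c * aeval f (pderiv i P) := by
  induction P using MvPolynomial.induction_on with
  | C b => simp [hD]
  | add P Q hP hQ => simp [hP, hQ, mul_add]
  | mul_X P j hP =>
    rw [map_mul, aeval_X, Derivation.leibniz, hP, hf, Derivation.leibniz, pderiv_X]
    by_cases h : j = i
    · subst h
      simp
      ring
    · simp [h]
      ring

/-- A coefficient of a reduced polynomial at a monomial involving the variable `i` can be recovered
from the derivative in direction `i`, since the factor `0 < s i < p` is invertible in
characteristic `p`. -/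
lemma coeff_mem_of_pderiv {p : ℕ} [Fact p.Prime] [CharP B p] (N : Ideal B)
    {P : MvPolynomial ι B} (hP : ReducedPoly p P) (i : ι)
    (h : ∀ s, coeff s (pderiv i P) ∈ N) (s : ι →₀ ℕ) (hs : s i ≠ 0) : coeff s P ∈ N := by
  by_cases h0 : coeff s P = 0
  · rw [h0]; exact N.zero_mem
  have hlt := hP s (mem_support_iff.2 h0) i
  have hle : Finsupp.single i 1 ≤ s := by
    rw [Finsupp.single_le_iff]; omega
  have h1 := h (s - Finsupp.single i 1)
  rw [coeff_pderiv, tsub_add_cancel_of_le hle] at h1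
  have h2 : (((s - Finsupp.single i 1 : ι →₀ ℕ) i : ℕ) : B) + 1 = ((s i : ℕ) : B) := by
    have : (s - Finsupp.single i 1 : ι →₀ ℕ) i + 1 = s i := by
      simp; omega
    rw [← this]; push_cast; rfl
  rw [h2] at h1
  have hu : IsUnit ((s i : ℕ) : B) :=
    (CharP.isUnit_natCast_iff (Fact.out : p.Prime)).2 fun hdvd =>
      absurd (Nat.le_of_dvd (Nat.pos_of_ne_zero hs) hdvd) (by omega)
  exact (Ideal.mul_unit_mem_iff_mem N hu).1 h1

/-- Independence modulo an ideal. If `B`-linear derivations `D i` stabilise the ideal `N` and satisfy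
`D i (f j) = δ i j * J` with `J` a nonzerodivisor modulo `N`, then a value at `f` of a reduced
polynomial lies in `N` only if all the coefficients do. The proof differentiates, by induction on
the degree. -/
lemma coeff_mem_of_aeval_mem {K : Type*} [CommRing K] [Algebra K A] [Fintype ι] [DecidableEq ι]
    {p : ℕ} [Fact p.Prime] [CharP B p] (N : Ideal A) (D : ι → Derivation K A A)
    (hD : ∀ i (b : B), D i (algebraMap B A b) = 0) (hN : ∀ i, ∀ x ∈ N, D i x ∈ N)
    (J : A) (hJ : ∀ x, J * x ∈ N → x ∈ N) (f : ι → A)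
    (hf : ∀ i j, D i (f j) = if j = i then J else 0)
    (P : MvPolynomial ι B) (hP : ReducedPoly p P) (hPN : aeval f P ∈ N) (s : ι →₀ ℕ) :
    algebraMap B A (coeff s P) ∈ N := by
  suffices H : ∀ (k : ℕ) (P : MvPolynomial ι B), ReducedPoly p P →
      (∀ s : ι →₀ ℕ, k ≤ s.degree → coeff s P = 0) → aeval f P ∈ N →
      ∀ s, coeff s P ∈ N.comap (algebraMap B A) by
    refine H (P.totalDegree + 1) P hP (fun s hs => ?_) hPN s
    apply coeff_eq_zero_of_totalDegree_lt
    have : s.degree = ∑ i ∈ s.support, s i := rfl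
    omega
  intro k
  induction k with
  | zero =>
    intro P _ h0 _ s
    rw [h0 s (Nat.zero_le _)]
    exact Ideal.zero_mem _
  | succ k ih =>
    intro P hP h0 hPN
    have hpos : ∀ s : ι →₀ ℕ, s ≠ 0 → coeff s P ∈ N.comap (algebraMap B A) := by
      intro s hs
      obtain ⟨i, hi⟩ := Finsupp.ne_iff.1 hs
      refine coeff_mem_of_pderiv _ hP i (ih _ (hP.pderiv i) ?_ ?_) s hi
      · intro t ht
        rw [coeff_pderiv, h0, zero_mul]
        simp only [map_add, Finsupp.degree_single]
        omega
      · apply hJ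
        rw [← derivation_aeval (D i) (hD i) f i J (hf i)]
        exact hN i _ hPN
    intro s
    by_cases hs : s = 0
    · -- the constant coefficient is the value minus the terms already known to lie in `N`
      subst hs
      have h1 : aeval f (P - C (coeff 0 P)) ∈ N := by
        rw [aeval_def, eval₂_eq']
        refine N.sum_mem fun t _ => N.mul_mem_right _ ?_
        by_cases ht : t = 0
        · subst ht; simp
        · rw [coeff_sub, coeff_C, if_neg (Ne.symm ht), sub_zero]
          exact hpos t ht
      rw [map_sub, aeval_C] at h1
      simpa using N.sub_mem hPN h1
    · exact hpos s hs

/-- Over a nontrivial commutative ring, a linearly independent family with as many members as a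
spanning family spans up to a nonzero factor. -/
lemma exists_smul_mem_span [Nontrivial B] {κ : Type*} [Fintype κ] (v w : κ → A)
    (hv : LinearIndependent B v) (hw : Submodule.span B (Set.range w) = ⊤) (g : A) :
    ∃ b : B, b ≠ 0 ∧ b • g ∈ Submodule.span B (Set.range v) := by
  classical
  let u : Option κ → A := fun o => o.elim g v
  have hu : ¬ LinearIndependent B u := by
    intro h
    have h1 := linearIndependent_le_span u h (Set.range w) hw
    rw [Cardinal.mk_fintype, Nat.cast_le, Fintype.card_option] at h1
    have := Fintype.card_range_le w
    omega
  rw [Fintype.not_linearIndependent_iff] at hu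
  obtain ⟨c, hc, o, ho⟩ := hu
  rw [Fintype.sum_option] at hc
  have hc' : c none • g = - ∑ i, c (some i) • v i := eq_neg_of_add_eq_zero_left hc
  refine ⟨c none, ?_, ?_⟩
  · intro h0
    rw [h0, zero_smul, eq_comm, neg_eq_zero] at hc'
    have := Fintype.linearIndependent_iff.1 hv _ hc'
    cases o with
    | none => exact ho h0
    | some i => exact ho (this i)
  · rw [hc']
    exact Submodule.neg_mem _ (Submodule.sum_mem _ fun i _ =>
      Submodule.smul_mem _ _ (Submodule.subset_span ⟨i, rfl⟩))

end General

/-! ### Polynomials over the ring of p-th powers of the variables -/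

section PthPowers

variable {K : Type*} [CommRing K] {n p : ℕ}

/-- The subring `K[x₁^p, …, xₙ^p]` of `K[x₁, …, xₙ]`. -/
noncomputable abbrev pthPowers (K : Type*) [CommRing K] (n p : ℕ) : Subalgebra K (MvPolynomial (Fin n) K) :=
  Algebra.adjoin K (Set.range fun i : Fin n => (X i : MvPolynomial (Fin n) K) ^ p)

instance [CharP K p] : CharP (pthPowers K n p) p :=
  (RingHom.charP_iff (algebraMap (pthPowers K n p) (MvPolynomial (Fin n) K))
    Subtype.val_injective p).2 inferInstance

lemma pow_mem_pthPowers [Fact p.Prime] [CharP K p] (h : MvPolynomial (Fin n) K) :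
    h ^ p ∈ pthPowers K n p := by
  induction h using MvPolynomial.induction_on with
  | C a => rw [← map_pow]; exact Subalgebra.algebraMap_mem _ _
  | add P Q hP hQ => rw [add_pow_char]; exact add_mem hP hQ
  | mul_X P i hP => rw [mul_pow]; exact mul_mem hP (Algebra.subset_adjoin ⟨i, rfl⟩)

lemma derivation_pthPowers [CharP K p]
    (D : Derivation K (MvPolynomial (Fin n) K) (MvPolynomial (Fin n) K))
    (b : pthPowers K n p) : D (algebraMap (pthPowers K n p) _ b) = 0 := by
  obtain ⟨b, hb⟩ := b
  change D b = 0
  induction hb using Algebra.adjoin_induction with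
  | mem x hx =>
    obtain ⟨i, rfl⟩ := hx
    simp [Derivation.leibniz_pow]
  | algebraMap r => simp
  | add x y _ _ hx hy => simp [hx, hy]
  | mul x y _ _ hx hy => simp [hx, hy]

/-- `K[x₁^p, …, xₙ^p]` is isomorphic to `K[x₁, …, xₙ]`. -/
lemma uniqueFactorizationMonoid_pthPowers [IsDomain K] [UniqueFactorizationMonoid K]
    [Fact p.Prime] : UniqueFactorizationMonoid (pthPowers K n p) := by
  have h : AlgebraicIndependent K (fun i : Fin n => (X i : MvPolynomial (Fin n) K) ^ p) := by
    have := expand_injective (R := K) (σ := Fin n) (Fact.out : p.Prime).pos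
    rw [AlgebraicIndependent]
    have h : aeval (fun i : Fin n => (X i : MvPolynomial (Fin n) K) ^ p) = expand p := by
      ext1 i; simp
    rwa [h]
  exact h.aevalEquiv.toMulEquiv.uniqueFactorizationMonoid inferInstance

lemma span_monomials_eq_top [Fact p.Prime] :
    Submodule.span (pthPowers K n p) (Set.range fun e : Fin n → Fin p =>
      ∏ i, (X i : MvPolynomial (Fin n) K) ^ (e i : ℕ)) = ⊤ := by
  have hp : 0 < p := (Fact.out : p.Prime).pos
  rw [eq_top_iff]
  rintro g -
  induction g using MvPolynomial.induction_on' with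
  | add P Q hP hQ => exact add_mem hP hQ
  | monomial s r =>
    have hb : C r * ∏ i, ((X i : MvPolynomial (Fin n) K) ^ p) ^ (s i / p) ∈ pthPowers K n p :=
      mul_mem (Subalgebra.algebraMap_mem (pthPowers K n p) r)
        (prod_mem fun i _ => pow_mem (Algebra.subset_adjoin (Set.mem_range_self i)) _)
    have : monomial s r = (⟨_, hb⟩ : pthPowers K n p) •
        ∏ i, (X i : MvPolynomial (Fin n) K) ^ (s i % p) := by
      rw [Subalgebra.smul_def, smul_eq_mul, mul_assoc, ← Finset.prod_mul_distrib, monomial_eq,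
        Finsupp.prod_fintype _ _ (by simp)]
      congr 1
      refine Finset.prod_congr rfl fun i _ => ?_
      rw [← pow_mul, ← pow_add, Nat.div_add_mod]
    rw [this]
    exact Submodule.smul_mem _ _ (Submodule.subset_span
      ⟨fun i => ⟨s i % p, Nat.mod_lt _ hp⟩, rfl⟩)

/-- `coeff_mem_of_aeval_mem` for a principal ideal generated in `K[x₁^p, …, xₙ^p]`, with the
derivations obtained from the partial derivatives and the adjugate of a Jacobian matrix. -/
lemma coeff_mem_of_jacobian [Fact p.Prime] [CharP K p] {ι : Type*} [Fintype ι] [DecidableEq ι]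
    (f : ι → MvPolynomial (Fin n) K) (j : ι → Fin n) (q : pthPowers K n p)
    (hJ : ∀ x, (Matrix.of fun a b => pderiv (j b) (f a)).det * x ∈
      Ideal.span {(q : MvPolynomial (Fin n) K)} → x ∈ Ideal.span {(q : MvPolynomial (Fin n) K)})
    (P : MvPolynomial ι (pthPowers K n p)) (hP : ReducedPoly p P)
    (hPN : aeval f P ∈ Ideal.span {(q : MvPolynomial (Fin n) K)}) (s : ι →₀ ℕ) :
    ((coeff s P : pthPowers K n p) : MvPolynomial (Fin n) K) ∈ Ideal.span {(q : MvPolynomial (Fin n) K)} := by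
  set M : Matrix ι ι (MvPolynomial (Fin n) K) := Matrix.of fun a b => pderiv (j b) (f a) with hM
  refine coeff_mem_of_aeval_mem (Ideal.span {(q : MvPolynomial (Fin n) K)})
    (fun i => ∑ b, M.adjugate b i • (pderiv (j b) : Derivation K _ _))
    (fun i b => derivation_pthPowers _ b) ?_ M.det hJ f ?_ P hP hPN s
  · intro i x hx
    obtain ⟨y, rfl⟩ := Ideal.mem_span_singleton.1 hx
    rw [Derivation.leibniz]
    have := derivation_pthPowers (∑ b, M.adjugate b i • (pderiv (j b) : Derivation K _ _)) q
    rw [show algebraMap (pthPowers K n p) (MvPolynomial (Fin n) K) q = q from rfl] at this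
    rw [this, smul_zero, add_zero]
    exact Ideal.mem_span_singleton.2 (Dvd.intro _ rfl)
  · intro i a
    have h := congrFun (congrFun M.mul_adjugate a) i
    rw [Matrix.mul_apply, Matrix.smul_apply, Matrix.one_apply, smul_eq_mul, mul_ite, mul_one,
      mul_zero] at h
    rw [← h]
    change Derivation.coeFnAddMonoidHom (∑ b, M.adjugate b i • pderiv (j b)) (f a) = _
    rw [map_sum, Finset.sum_apply]
    refine Finset.sum_congr rfl fun b _ => ?_
    simp [hM, mul_comm]

lemma monomials_independent [Fact p.Prime] [CharP K p] :
    LinearIndependent (pthPowers K n p) (fun e : Fin n → Fin p =>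
      ∏ i, (X i : MvPolynomial (Fin n) K) ^ (e i : ℕ)) := by
  refine linearIndependent_of_reduced p _ fun P hP h0 => ?_
  ext1 s
  have hdet : (Matrix.of fun a b : Fin n =>
      pderiv b (X a : MvPolynomial (Fin n) K)) = 1 := by
    ext1 a b
    simp [pderiv_X, Matrix.one_apply, Pi.single_apply]
  have := coeff_mem_of_jacobian X id (0 : pthPowers K n p)
    (by intro x; simp only [id]; rw [hdet]; simp) P hP (by rw [h0]; exact Ideal.zero_mem _) s
  simpa using this

/-- `K[x₁, …, xₙ]` as a free module over `K[x₁^p, …, xₙ^p]`, on the monomials with exponents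
less than `p`. -/
noncomputable def monomialBasis [Fact p.Prime] [CharP K p] :
    Module.Basis (Fin n → Fin p) (pthPowers K n p) (MvPolynomial (Fin n) K) :=
  Module.Basis.mk monomials_independent span_monomials_eq_top.ge

lemma mem_span_iff_repr [Fact p.Prime] [CharP K p] (q : pthPowers K n p)
    (h : MvPolynomial (Fin n) K) :
    h ∈ Ideal.span {(q : MvPolynomial (Fin n) K)} ↔ ∀ e, q ∣ monomialBasis.repr h e := by
  constructor
  · intro hh e
    obtain ⟨y, rfl⟩ := Ideal.mem_span_singleton.1 hh
    rw [← smul_eq_mul, ← Subalgebra.smul_def, map_smul, Finsupp.smul_apply, smul_eq_mul]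
    exact Dvd.intro _ rfl
  · intro hh
    rw [← monomialBasis.sum_repr h]
    refine Ideal.sum_mem _ fun e _ => ?_
    obtain ⟨c, hc⟩ := hh e
    rw [hc, Subalgebra.smul_def, smul_eq_mul, Subalgebra.coe_mul, mul_assoc]
    exact Ideal.mem_span_singleton.2 (Dvd.intro _ rfl)

lemma dvd_of_coe_mem_span [Fact p.Prime] [CharP K p] (q b : pthPowers K n p)
    (h : (b : MvPolynomial (Fin n) K) ∈ Ideal.span {(q : MvPolynomial (Fin n) K)}) : q ∣ b := by
  have hp : 0 < p := (Fact.out : p.Prime).pos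
  have h1 := (mem_span_iff_repr q _).1 h fun _ => ⟨0, hp⟩
  have h2 : (b : MvPolynomial (Fin n) K) =
      b • (monomialBasis fun _ => ⟨0, hp⟩ : MvPolynomial (Fin n) K) := by
    simp [monomialBasis, Subalgebra.smul_def]
  rw [h2, map_smul] at h1
  simpa using h1

/-- By freeness, a prime `q` of `K[x₁^p, …, xₙ^p]` satisfies: if `q ∤ J ^ p` then `J` is a
nonzerodivisor modulo `q K[x₁, …, xₙ]`. -/
lemma mem_span_of_mul_mem [Fact p.Prime] [CharP K p] (q : pthPowers K n p) (hq : Prime q)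
    (J : MvPolynomial (Fin n) K) (hJ : ¬ (q : MvPolynomial (Fin n) K) ∣ J ^ p)
    (x : MvPolynomial (Fin n) K) (hx : J * x ∈ Ideal.span {(q : MvPolynomial (Fin n) K)}) :
    x ∈ Ideal.span {(q : MvPolynomial (Fin n) K)} := by
  have hp : p ≠ 0 := (Fact.out : p.Prime).ne_zero
  set c : pthPowers K n p := ⟨J ^ p, pow_mem_pthPowers J⟩ with hc
  have hqc : ¬ q ∣ c := by
    rintro ⟨y, hy⟩
    exact hJ ⟨y, by simpa [hc] using congrArg Subtype.val hy⟩
  have h1 : c • x ∈ Ideal.span {(q : MvPolynomial (Fin n) K)} := by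
    have : c • x = J ^ (p - 1) * (J * x) := by
      rw [Subalgebra.smul_def, smul_eq_mul, ← mul_assoc, ← pow_succ, Nat.sub_one_add_one hp]
    rw [this]
    exact Ideal.mul_mem_left _ _ hx
  rw [mem_span_iff_repr] at h1 ⊢
  intro e
  have := h1 e
  rw [map_smul, Finsupp.smul_apply, smul_eq_mul] at this
  exact (hq.dvd_or_dvd this).resolve_left hqc

/-- Let the maximal minors of the Jacobian matrix of `f` have no common nonunit divisor. For each
prime `q` of `K[x₁^p, …, xₙ^p]`, a prime factor of `q` in `K[x₁, …, xₙ]` does not divide some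
minor `J`, hence does not divide `J ^ p`, and so `q` does not divide `J ^ p`. -/
lemma exists_minor [Fact p.Prime] [CharP K p] [IsDomain K] [UniqueFactorizationMonoid K] {m : ℕ}
    (f : Fin m → MvPolynomial (Fin n) K)
    (hdgcd : ∀ q : MvPolynomial (Fin n) K,
      (∀ j : Fin m → Fin n,
        q ∣ Matrix.det (Matrix.of fun a b => pderiv (j b) (f a))) → IsUnit q)
    (q : pthPowers K n p) (hq : Prime q) :
    ∃ j : Fin m → Fin n, ¬ (q : MvPolynomial (Fin n) K) ∣
      Matrix.det (Matrix.of fun a b => pderiv (j b) (f a)) ^ p := by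
  by_contra! hcon
  have hp : p ≠ 0 := (Fact.out : p.Prime).ne_zero
  have hq0 : (q : MvPolynomial (Fin n) K) ≠ 0 := fun h => hq.ne_zero (Subtype.ext h)
  have hqu : ¬ IsUnit (q : MvPolynomial (Fin n) K) := by
    intro hu
    obtain ⟨a, ha⟩ := hu.exists_right_inv
    -- the inverse of `q ^ p` is `a ^ p`, again an element of `K[x₁^p, …, xₙ^p]`
    have h1 : q ^ p * ⟨a ^ p, pow_mem_pthPowers a⟩ = 1 := by
      apply Subtype.ext
      simp [← mul_pow, ha]
    exact hq.not_isUnit ((isUnit_pow_iff hp).1 (IsUnit.of_mul_eq_one _ h1))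
  obtain ⟨π, hπ, hπq⟩ := WfDvdMonoid.exists_irreducible_factor hqu hq0
  exact hπ.not_isUnit (hdgcd π fun j => hπ.prime.dvd_of_dvd_pow (hπq.trans (hcon j)))

/-- For `l` outside the range of `j`, adjoining `x_l` to `f` does not change the Jacobian
determinant. -/
lemma det_jacobian_cons {m : ℕ} (f : Fin m → MvPolynomial (Fin (m + 1)) K) (j : Fin m → Fin (m + 1))
    (l : Fin (m + 1)) (hl : ∀ b, j b ≠ l) :
    (Matrix.of fun a b : Fin (m + 1) =>
      pderiv ((Fin.cons l j : Fin (m + 1) → Fin (m + 1)) b)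
        ((Fin.cons (X l) f : Fin (m + 1) → MvPolynomial (Fin (m + 1)) K) a)).det =
    (Matrix.of fun a b => pderiv (j b) (f a)).det := by
  rw [Matrix.det_succ_row_zero, Fin.sum_univ_succ, Finset.sum_eq_zero]
  · simp
    rfl
  · intro b _
    simp [pderiv_X_of_ne (hl b).symm]

end PthPowers

/-! ### Constants of a derivation -/

section Saturation

variable {K : Type*} [CommRing K] [IsDomain K] {p : ℕ} [Fact p.Prime] [CharP K p] {m : ℕ}

/-- The `K[x₁^p, …, xₙ^p]`-span of the products `∏ i, f i ^ e i` is saturated: denominators can be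
cancelled one prime factor at a time. -/
lemma mem_span_of_smul_mem [UniqueFactorizationMonoid K] {n : ℕ}
    (f : Fin m → MvPolynomial (Fin n) K)
    (hdgcd : ∀ q : MvPolynomial (Fin n) K,
      (∀ j : Fin m → Fin n,
        q ∣ Matrix.det (Matrix.of fun a b => pderiv (j b) (f a))) → IsUnit q)
    (b : pthPowers K n p) (hb : b ≠ 0) (g : MvPolynomial (Fin n) K)
    (hg : b • g ∈ Submodule.span (pthPowers K n p)
      (Set.range fun e : Fin m → Fin p => ∏ i, f i ^ (e i : ℕ))) :
    g ∈ Submodule.span (pthPowers K n p)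
      (Set.range fun e : Fin m → Fin p => ∏ i, f i ^ (e i : ℕ)) := by
  have := uniqueFactorizationMonoid_pthPowers (K := K) (n := n) (p := p)
  induction b using UniqueFactorizationMonoid.induction_on_prime with
  | h₁ => exact absurd rfl hb
  | h₂ u hu => exact (Submodule.smul_mem_iff_of_isUnit _ hu).1 hg
  | h₃ b q hb0 hq ih =>
    refine ih hb0 ?_
    rw [mul_smul] at hg
    generalize b • g = g' at hg ⊢
    obtain ⟨P, hP, hPg⟩ := (mem_span_iff_reduced p f _).1 hg
    obtain ⟨j, hj⟩ := exists_minor f hdgcd q hq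
    have hmem : aeval f P ∈ Ideal.span {(q : MvPolynomial (Fin n) K)} := by
      rw [hPg, Subalgebra.smul_def, smul_eq_mul]
      exact Ideal.mem_span_singleton.2 (Dvd.intro _ rfl)
    have hdvd : ∀ s, q ∣ coeff s P := fun s => dvd_of_coe_mem_span q _
      (coeff_mem_of_jacobian f j q (mem_span_of_mul_mem q hq _ hj) P hP hmem s)
    obtain ⟨Q, rfl⟩ := (C_dvd_iff_dvd_coeff q P).2 hdvd
    refine (mem_span_iff_reduced p f _).2 ⟨Q, fun s hs i => hP s ?_ i, ?_⟩
    · rw [mem_support_iff, coeff_C_mul]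
      exact mul_ne_zero hq.ne_zero (mem_support_iff.1 hs)
    · rw [map_mul, aeval_C, Subalgebra.smul_def, smul_eq_mul] at hPg
      exact mul_left_cancel₀ (fun h => hq.ne_zero (Subtype.ext h)) hPg

/-- A nonzero Jacobian determinant makes the reduced products independent. -/
lemma eq_zero_of_jacobian {n : ℕ} {ι : Type*} [Fintype ι] [DecidableEq ι]
    (f : ι → MvPolynomial (Fin n) K) (j : ι → Fin n)
    (hJ : (Matrix.of fun a b => pderiv (j b) (f a)).det ≠ 0)
    (P : MvPolynomial ι (pthPowers K n p)) (hP : ReducedPoly p P) (h0 : aeval f P = 0) :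
    P = 0 := by
  ext1 s
  have := coeff_mem_of_jacobian f j (0 : pthPowers K n p)
    (by intro x; simp [hJ]) P hP (by rw [h0]; exact Ideal.zero_mem _) s
  simpa using this

/-- A nonzero multiple of a constant of `d` lies in the span of the products `∏ i, f i ^ e i`.
Adjoining to `f` a variable `x_l` gives a family whose reduced products number `p ^ n`, so that they
span up to a nonzero factor; the expansion of a constant cannot involve `x_l`. -/
lemma exists_smul_mem_of_constant
    (d : Derivation K (MvPolynomial (Fin (m + 1)) K) (MvPolynomial (Fin (m + 1)) K))
    (hd : d ≠ 0) (f : Fin m → MvPolynomial (Fin (m + 1)) K) (hdf : ∀ i, d (f i) = 0)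
    (j : Fin m → Fin (m + 1)) (hJ : (Matrix.of fun a b => pderiv (j b) (f a)).det ≠ 0)
    (g : MvPolynomial (Fin (m + 1)) K) (hg : d g = 0) :
    ∃ b : pthPowers K (m + 1) p, b ≠ 0 ∧ b • g ∈ Submodule.span (pthPowers K (m + 1) p)
      (Set.range fun e : Fin m → Fin p => ∏ i, f i ^ (e i : ℕ)) := by
  obtain ⟨l, hl⟩ : ∃ l, ∀ b, j b ≠ l := by
    by_contra! h
    have := Fintype.card_le_of_surjective j h
    simp at this
  set F : Fin (m + 1) → MvPolynomial (Fin (m + 1)) K := Fin.cons (X l) f with hF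
  have hind : ∀ P : MvPolynomial (Fin (m + 1)) (pthPowers K (m + 1) p), ReducedPoly p P →
      aeval F P = 0 → P = 0 :=
    eq_zero_of_jacobian F (Fin.cons l j) (by rw [hF, det_jacobian_cons f j l hl]; exact hJ)
  have hexp : ∀ h : MvPolynomial (Fin (m + 1)) K, ∃ b : pthPowers K (m + 1) p, b ≠ 0 ∧
      ∃ P : MvPolynomial (Fin (m + 1)) (pthPowers K (m + 1) p), ReducedPoly p P ∧
        aeval F P = b • h := by
    intro h
    obtain ⟨b, hb, hbh⟩ := exists_smul_mem_span _ _ (linearIndependent_of_reduced p F hind)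
      span_monomials_eq_top h
    exact ⟨b, hb, (mem_span_iff_reduced p F _).1 hbh⟩
  have hdF : ∀ i, d (F i) = if i = 0 then d (X l) else 0 := by
    intro i
    refine Fin.cases ?_ (fun i => ?_) i
    · simp [hF]
    · simp [hF, hdf]
  have hder : ∀ P : MvPolynomial (Fin (m + 1)) (pthPowers K (m + 1) p),
      d (aeval F P) = d (X l) * aeval F (pderiv 0 P) :=
    derivation_aeval d (derivation_pthPowers d) F 0 (d (X l)) hdF
  have hdsmul : ∀ (b : pthPowers K (m + 1) p) h, d (b • h) = b • d h := by
    intro b h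
    have := derivation_pthPowers d b
    rw [show algebraMap (pthPowers K (m + 1) p) (MvPolynomial (Fin (m + 1)) K) b = b from rfl]
      at this
    simp [Subalgebra.smul_def, this]
  -- otherwise `d` would vanish on a nonzero multiple of every polynomial
  have hdl : d (X l) ≠ 0 := by
    intro h0
    apply hd
    ext1 i
    obtain ⟨b, hb, P, -, hPb⟩ := hexp (X i)
    have := hder P
    rw [hPb, h0, zero_mul, hdsmul, Subalgebra.smul_def, smul_eq_mul, mul_eq_zero] at this
    simpa using this.resolve_left fun h => hb (Subtype.ext h)
  obtain ⟨b, hb, P, hP, hPb⟩ := hexp g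
  refine ⟨b, hb, ?_⟩
  have hP0 : pderiv 0 P = 0 := by
    have h1 := hder P
    rw [hPb, hdsmul, hg, smul_zero] at h1
    exact hind _ (hP.pderiv 0) ((mul_eq_zero.1 h1.symm).resolve_left hdl)
  have hs0 : ∀ s ∈ P.support, s 0 = 0 := by
    intro s hs
    by_contra h
    have := coeff_mem_of_pderiv ⊥ hP 0 (by simp [hP0]) s h
    exact mem_support_iff.1 hs (by simpa using this)
  rw [← hPb, aeval_def, eval₂_eq']
  refine Submodule.sum_mem _ fun s hs => ?_
  rw [← Algebra.smul_def]
  refine Submodule.smul_mem _ _ (Submodule.subset_span ⟨fun i => ⟨s i.succ, hP s hs _⟩, ?_⟩)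
  rw [Fin.prod_univ_succ, hs0 s hs]
  simp [hF]

end Saturation

/-- If `f₁,…,f_{n-1}` (`n = m + 1`) are constants of a nonzero
`K`-derivation `d` of `K[x₁,…,xₙ]` (`K` a UFD of characteristic `p > 0`) and
`dgcd(f₁,…,f_{n-1})` is a unit, then `f₁,…,f_{n-1}` form a `p`-basis of the ring
of constants of `d` over `B = K[x₁^p,…,xₙ^p]`: the `p^{n-1}` products
`f₁^{e₁}⋯f_{n-1}^{e_{n-1}}` (`0 ≤ eᵢ < p`) are `B`-linearly independent and
`B`-span the ring of constants. -/
theorem p_basis_of_unit_dgcd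
    {K : Type*} [CommRing K] [IsDomain K] [UniqueFactorizationMonoid K]
    (p : ℕ) [Fact p.Prime] [CharP K p] (m : ℕ)
    (d : Derivation K (MvPolynomial (Fin (m + 1)) K) (MvPolynomial (Fin (m + 1)) K))
    (hd : d ≠ 0)
    (f : Fin m → MvPolynomial (Fin (m + 1)) K)
    (hdf : ∀ i, d (f i) = 0)
    (hdgcd : ∀ q : MvPolynomial (Fin (m + 1)) K,
      (∀ j : Fin m → Fin (m + 1),
        q ∣ Matrix.det (Matrix.of fun a b => pderiv (j b) (f a))) → IsUnit q) :
    LinearIndependent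
      ↥(Algebra.adjoin K
          (Set.range fun i : Fin (m + 1) => (X i : MvPolynomial (Fin (m + 1)) K) ^ p))
      (fun e : Fin m → Fin p => ∏ i, f i ^ (e i : ℕ)) ∧
    ∀ g, d g = 0 →
      g ∈ Submodule.span
        ↥(Algebra.adjoin K
            (Set.range fun i : Fin (m + 1) => (X i : MvPolynomial (Fin (m + 1)) K) ^ p))
        (Set.range fun e : Fin m → Fin p => ∏ i, f i ^ (e i : ℕ)) := by
  obtain ⟨j, hj⟩ : ∃ j : Fin m → Fin (m + 1),
      (Matrix.of fun a b => pderiv (j b) (f a)).det ≠ 0 := by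
    by_contra! h
    exact not_isUnit_zero (hdgcd 0 fun j => by rw [h j])
  refine ⟨linearIndependent_of_reduced p f (eq_zero_of_jacobian f j hj), fun g hg => ?_⟩
  obtain ⟨b, hb, hbg⟩ := exists_smul_mem_of_constant d hd f hdf j hj g hg
  exact mem_span_of_smul_mem f hdgcd b hb g hbg
end

section
/- Let K be a unique factorization domain of characteristic p > 0 and let d be a K-derivation of K[x,y]. Write d(x) = Σ_{0≤i,j<p} a_{ij} x^i y^j and d(y) = Σ_{0≤i,j<p} b_{ij} x^i y^j, where a_{ij}, b_{ij} ∈ K[x^p, y^p] (this representation is unique). Then d is a Jacobian derivation (i.e. d = d_f for some f ∈ K[x,y]) if and only if d* = 0, a_{0,p−1} = 0 and b_{p−1,0} = 0. -/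
open MvPolynomial

/-!
Write `P = d x` and `Q = d y`, so that `d = d_f` means `∂f/∂y = -P` and `∂f/∂x = Q`.  Everything is
read off coefficients.

* The coefficient of `x^m y^n` in `Σ c_{ij} x^i y^j`, with `c_{ij} ∈ K[x^p, y^p]`, is a coefficient
  of `c_{m % p, n % p}` alone.  Hence `a_{0,p-1} = 0` says that `P` has no monomial `x^m y^n` with
  `p ∣ m` and `p ∣ n + 1`, and `b_{p-1,0} = 0` says that `Q` has none with `p ∣ m + 1` and `p ∣ n`
  (`eq_zero_iff_coeff`).
* The derivative `∂f/∂y` never has monomials with `p ∣ n + 1`, and likewise for `∂f/∂x`; together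
  with the symmetry of second derivatives this gives necessity.
* For sufficiency, integers prime to `p` are units of `K`, so `f` can be found coefficientwise: the
  coefficient at `x^m y^n` is `Q_{m-1,n} / m` if `p ∤ m`, else `-P_{m,n-1} / n` if `p ∤ n`, else `0`.
  The equation `d* = 0` makes the two formulas agree and kills the coefficients that cannot be
  integrated, except those excluded by the two conditions above.
-/

namespace JacobianCriterion

variable {K : Type*} [CommRing K]

/-- The exponent vector of `x^m y^n`. -/
noncomputable def expo (m n : ℕ) : Fin 2 →₀ ℕ := Finsupp.single 0 m + Finsupp.single 1 n

@[simp] lemma expo_zero (m n : ℕ) : expo m n 0 = m := by simp [expo]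

@[simp] lemma expo_one (m n : ℕ) : expo m n 1 = n := by simp [expo]

lemma expo_eq (s : Fin 2 →₀ ℕ) : s = expo (s 0) (s 1) := by
  ext i; fin_cases i <;> simp

lemma expo_inj {m n m' n' : ℕ} : expo m n = expo m' n' ↔ m = m' ∧ n = n' := by
  constructor
  · intro h
    exact ⟨by simpa using DFunLike.congr_fun h 0, by simpa using DFunLike.congr_fun h 1⟩
  · rintro ⟨rfl, rfl⟩; rfl

lemma ext_expo {f g : MvPolynomial (Fin 2) K}
    (h : ∀ m n, coeff (expo m n) f = coeff (expo m n) g) : f = g := by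
  ext s; rw [expo_eq s]; exact h _ _

lemma coeff_pderiv_zero (f : MvPolynomial (Fin 2) K) (m n : ℕ) :
    coeff (expo m n) (pderiv 0 f) = coeff (expo (m + 1) n) f * ((m + 1 : ℕ) : K) := by
  have : expo m n + Finsupp.single 0 1 = expo (m + 1) n := by
    ext i; fin_cases i <;> simp
  rw [coeff_pderiv, this]; simp

lemma coeff_pderiv_one (f : MvPolynomial (Fin 2) K) (m n : ℕ) :
    coeff (expo m n) (pderiv 1 f) = coeff (expo m (n + 1)) f * ((n + 1 : ℕ) : K) := by
  have : expo m n + Finsupp.single 1 1 = expo m (n + 1) := by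
    ext i; fin_cases i <;> simp
  rw [coeff_pderiv, this]; simp

lemma exists_bound (f : MvPolynomial (Fin 2) K) :
    ∃ N, ∀ m n, N ≤ m ∨ N ≤ n → coeff (expo m n) f = 0 := by
  refine ⟨f.totalDegree + 1, fun m n h => coeff_eq_zero_of_totalDegree_lt ?_⟩
  have : ∑ i ∈ (expo m n).support, expo m n i = m + n := by
    rw [Finset.sum_subset (Finset.subset_univ _)]
    · simp
    · intro i _ hi; simpa using hi
  rw [this]; omega

lemma exists_of_coeff (G : ℕ → ℕ → K) (N : ℕ) (hG : ∀ m n, N ≤ m ∨ N ≤ n → G m n = 0) :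
    ∃ f : MvPolynomial (Fin 2) K, ∀ m n, coeff (expo m n) f = G m n := by
  classical
  refine ⟨∑ t ∈ Finset.range N ×ˢ Finset.range N, monomial (expo t.1 t.2) (G t.1 t.2),
    fun m n => ?_⟩
  simp only [coeff_sum, coeff_monomial, expo_inj]
  rw [Finset.sum_eq_single (m, n)]
  · simp
  · rintro ⟨i, j⟩ _ hne
    rw [if_neg]
    rintro ⟨rfl, rfl⟩; exact hne rfl
  · intro h
    rw [if_pos ⟨rfl, rfl⟩]
    apply hG
    simp at h; omega

/-- Only monomials in `x^p` and `y^p` occur in an element of `K[x^p, y^p]`. -/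
lemma dvd_of_coeff_ne_zero {p : ℕ} {c : MvPolynomial (Fin 2) K}
    (hc : c ∈ Algebra.adjoin K ({X 0 ^ p, X 1 ^ p} : Set (MvPolynomial (Fin 2) K))) :
    ∀ s : Fin 2 →₀ ℕ, coeff s c ≠ 0 → ∀ i, p ∣ s i := by
  classical
  induction hc using Algebra.adjoin_induction with
  | mem g hg =>
    intro s hs i
    rcases hg with rfl | rfl
    all_goals
      rw [coeff_X_pow] at hs
      have := (ite_ne_right_iff.1 hs).1
      subst this
      fin_cases i <;> simp
  | algebraMap r =>
    intro s hs i
    rw [algebraMap_eq, coeff_C] at hs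
    have := (ite_ne_right_iff.1 hs).1
    subst this
    simp
  | add f g _ _ hf hg =>
    intro s hs i
    rw [coeff_add] at hs
    by_cases h : coeff s f = 0
    · exact hg s (by simpa [h] using hs) i
    · exact hf s h i
  | mul f g _ _ hf hg =>
    intro s hs i
    rw [coeff_mul] at hs
    obtain ⟨t, ht, hne⟩ := Finset.exists_ne_zero_of_sum_ne_zero hs
    rw [← Finset.HasAntidiagonal.mem_antidiagonal.1 ht]
    exact dvd_add (hf _ (left_ne_zero_of_mul hne) i) (hg _ (right_ne_zero_of_mul hne) i)

/-- Of the terms `c_{ij} x^i y^j`, only the one whose `(i, j)` is congruent to the exponent mod `p`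
contributes to a given coefficient. -/
lemma coeff_rep {p : ℕ} {c : ℕ → ℕ → MvPolynomial (Fin 2) K}
    (hc : ∀ i j, c i j ∈ Algebra.adjoin K ({X 0 ^ p, X 1 ^ p} : Set (MvPolynomial (Fin 2) K)))
    {i j : ℕ} (hi : i < p) (hj : j < p) (u v : ℕ) :
    coeff (expo (p * u + i) (p * v + j))
      (∑ i ∈ Finset.range p, ∑ j ∈ Finset.range p, c i j * X 0 ^ i * X 1 ^ j) =
      coeff (expo (p * u) (p * v)) (c i j) := by
  have key : ∀ i' < p, ∀ j' < p, coeff (expo (p * u + i) (p * v + j))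
      (c i' j' * X 0 ^ i' * X 1 ^ j') =
      if i' = i ∧ j' = j then coeff (expo (p * u) (p * v)) (c i j) else 0 := by
    intro i' hi' j' hj'
    have hm : (X 0 ^ i' * X 1 ^ j' : MvPolynomial (Fin 2) K) = monomial (expo i' j') 1 := by
      rw [X_pow_eq_monomial, X_pow_eq_monomial, monomial_mul, one_mul, expo]
    rw [mul_assoc, hm, coeff_mul_monomial', mul_one]
    split_ifs with h1 h2 h2
    · obtain ⟨rfl, rfl⟩ := h2
      congr 1
      ext k; fin_cases k <;> simp
    · by_contra hne
      have hd := dvd_of_coeff_ne_zero (hc i' j') _ hne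
      have l0 : i' ≤ p * u + i := by simpa using h1 0
      have l1 : j' ≤ p * v + j := by simpa using h1 1
      have d0 : p ∣ p * u + i - i' := by simpa using hd 0
      have d1 : p ∣ p * v + j - j' := by simpa using hd 1
      apply h2
      have e0 : i' ≡ p * u + i [MOD p] := (Nat.modEq_iff_dvd' l0).2 d0
      have e1 : j' ≡ p * v + j [MOD p] := (Nat.modEq_iff_dvd' l1).2 d1
      simp only [Nat.ModEq, Nat.mul_add_mod, Nat.mod_eq_of_lt hi, Nat.mod_eq_of_lt hj,
        Nat.mod_eq_of_lt hi', Nat.mod_eq_of_lt hj'] at e0 e1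
      exact ⟨e0, e1⟩
    · exfalso
      obtain ⟨rfl, rfl⟩ := h2
      apply h1
      intro k; fin_cases k <;> simp
    · rfl
  simp only [coeff_sum]
  rw [Finset.sum_eq_single i, Finset.sum_eq_single j]
  · rw [key i hi j hj, if_pos ⟨rfl, rfl⟩]
  · intro j' hj' hne
    rw [key i hi j' (Finset.mem_range.1 hj'), if_neg fun h => hne h.2]
  · intro h; exact absurd (Finset.mem_range.2 hj) h
  · intro i' hi' hne
    refine Finset.sum_eq_zero fun j' hj' => ?_
    rw [key i' (Finset.mem_range.1 hi') j' (Finset.mem_range.1 hj'), if_neg fun h => hne h.1]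
  · intro h; exact absurd (Finset.mem_range.2 hi) h

/-- Vanishing of `c_{ij}`, stated through the coefficients of the represented polynomial `P`. -/
lemma eq_zero_iff_coeff {p : ℕ} {c : ℕ → ℕ → MvPolynomial (Fin 2) K}
    (hc : ∀ i j, c i j ∈ Algebra.adjoin K ({X 0 ^ p, X 1 ^ p} : Set (MvPolynomial (Fin 2) K)))
    {i j : ℕ} (hi : i < p) (hj : j < p) {P : MvPolynomial (Fin 2) K}
    (hP : P = ∑ i ∈ Finset.range p, ∑ j ∈ Finset.range p, c i j * X 0 ^ i * X 1 ^ j) :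
    c i j = 0 ↔ ∀ u v, coeff (expo (p * u + i) (p * v + j)) P = 0 := by
  simp only [hP, coeff_rep hc hi hj]
  constructor
  · intro h u v; simp [h]
  · intro h
    apply ext_expo
    intro m n
    rw [coeff_zero]
    by_contra hne
    have hd := dvd_of_coeff_ne_zero (hc i j) _ hne
    obtain ⟨u, hu⟩ := hd 0
    obtain ⟨v, hv⟩ := hd 1
    rw [expo_zero] at hu
    rw [expo_one] at hv
    subst hu hv
    exact hne (h u v)

/-- The coefficientwise form of sufficiency: a divergence-free pair `(P, Q)` without
the two families of non-integrable monomials is `(-∂f/∂y, ∂f/∂x)` for some `f`. -/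
lemma exists_potential (p : ℕ) [Fact p.Prime] [CharP K p] (P Q : MvPolynomial (Fin 2) K)
    (hdiv : pderiv 0 P + pderiv 1 Q = 0)
    (hP : ∀ m n, p ∣ m → p ∣ n + 1 → coeff (expo m n) P = 0)
    (hQ : ∀ m n, p ∣ m + 1 → p ∣ n → coeff (expo m n) Q = 0) :
    ∃ f : MvPolynomial (Fin 2) K, pderiv 0 f = Q ∧ pderiv 1 f = -P := by
  classical
  have hunit : ∀ n : ℕ, ¬ p ∣ n → IsUnit (n : K) := fun n hn =>
    (CharP.isUnit_natCast_iff (R := K) Fact.out).2 hn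
  have hdvd : ∀ n : ℕ, p ∣ n → (n : K) = 0 := fun n hn => (CharP.cast_eq_zero_iff K p n).2 hn
  have hD : ∀ m n, coeff (expo (m + 1) n) P * ((m + 1 : ℕ) : K) +
      coeff (expo m (n + 1)) Q * ((n + 1 : ℕ) : K) = 0 := by
    intro m n
    rw [← coeff_pderiv_zero, ← coeff_pderiv_one, ← coeff_add, hdiv, coeff_zero]
  obtain ⟨N₁, h₁⟩ := exists_bound P
  obtain ⟨N₂, h₂⟩ := exists_bound Q
  obtain ⟨f, hf⟩ := exists_of_coeff (K := K)
    (fun m n => if p ∣ m then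
        if p ∣ n then 0 else -(coeff (expo m (n - 1)) P * Ring.inverse (n : K))
      else coeff (expo (m - 1) n) Q * Ring.inverse (m : K)) (N₁ + N₂ + 1) (by
      intro m n h
      split_ifs
      · rfl
      · rw [h₁ _ _ (by omega)]; simp
      · rw [h₂ _ _ (by omega)]; simp)
  refine ⟨f, ext_expo fun m n => ?_, ext_expo fun m n => ?_⟩
  · rw [coeff_pderiv_zero, hf]
    by_cases hm : p ∣ m + 1
    · rw [hdvd _ hm, mul_zero]
      by_cases hn : p ∣ n
      · exact (hQ m n hm hn).symm
      · obtain ⟨k, rfl⟩ : ∃ k, n = k + 1 :=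
          Nat.exists_eq_succ_of_ne_zero (by rintro rfl; simp at hn)
        have := hD m k
        rw [hdvd _ hm, mul_zero, zero_add] at this
        exact ((hunit _ hn).mul_left_eq_zero.1 this).symm
    · rw [if_neg hm, mul_assoc, Ring.inverse_mul_cancel _ (hunit _ hm), mul_one,
        Nat.add_sub_cancel]
  · rw [coeff_pderiv_one, hf, coeff_neg]
    by_cases hn : p ∣ n + 1
    · rw [hdvd _ hn, mul_zero]
      by_cases hm : p ∣ m
      · rw [hP m n hm hn, neg_zero]
      · obtain ⟨k, rfl⟩ : ∃ k, m = k + 1 :=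
          Nat.exists_eq_succ_of_ne_zero (by rintro rfl; simp at hm)
        have := hD k n
        rw [hdvd _ hn, mul_zero, add_zero] at this
        rw [(hunit _ hm).mul_left_eq_zero.1 this, neg_zero]
    · by_cases hm : p ∣ m
      · rw [if_pos hm, if_neg hn, neg_mul, mul_assoc,
          Ring.inverse_mul_cancel _ (hunit _ hn), mul_one, Nat.add_sub_cancel]
      · obtain ⟨k, rfl⟩ : ∃ k, m = k + 1 :=
          Nat.exists_eq_succ_of_ne_zero (by rintro rfl; simp at hm)
        rw [if_neg hm, Nat.add_sub_cancel]
        have h := hD k n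
        have hi := Ring.inverse_mul_cancel _ (hunit _ hm)
        linear_combination Ring.inverse ((k + 1 : ℕ) : K) * h
          - coeff (expo (k + 1) n) P * hi

end JacobianCriterion

open JacobianCriterion in
/-- Lemma 2 a).  `K` a UFD of characteristic `p > 0`, `d` a
`K`-derivation of `K[x,y]` (with `x = X 0`, `y = X 1`), and
`d(x) = Σ_{0≤i,j<p} a_{ij} x^i y^j`, `d(y) = Σ_{0≤i,j<p} b_{ij} x^i y^j` with
`a_{ij}, b_{ij} ∈ K[x^p, y^p]`.  Then `d` is a Jacobian derivation iff
`d* = 0`, `a_{0,p-1} = 0` and `b_{p-1,0} = 0`. -/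
theorem lemma2a_jacobian_criterion
    {K : Type*} [CommRing K] [IsDomain K] [UniqueFactorizationMonoid K]
    (p : ℕ) [Fact p.Prime] [CharP K p]
    (d : Derivation K (MvPolynomial (Fin 2) K) (MvPolynomial (Fin 2) K))
    (a b : ℕ → ℕ → MvPolynomial (Fin 2) K)
    (ha : ∀ i j, a i j ∈ Algebra.adjoin K ({X 0 ^ p, X 1 ^ p} : Set (MvPolynomial (Fin 2) K)))
    (hb : ∀ i j, b i j ∈ Algebra.adjoin K ({X 0 ^ p, X 1 ^ p} : Set (MvPolynomial (Fin 2) K)))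
    (hdx : d (X 0) = ∑ i ∈ Finset.range p, ∑ j ∈ Finset.range p, a i j * X 0 ^ i * X 1 ^ j)
    (hdy : d (X 1) = ∑ i ∈ Finset.range p, ∑ j ∈ Finset.range p, b i j * X 0 ^ i * X 1 ^ j) :
    (∃ f : MvPolynomial (Fin 2) K, ∀ g,
        d g = pderiv (0 : Fin 2) f * pderiv (1 : Fin 2) g
            - pderiv (1 : Fin 2) f * pderiv (0 : Fin 2) g) ↔
      (pderiv (0 : Fin 2) (d (X 0)) + pderiv (1 : Fin 2) (d (X 1)) = 0 ∧
        a 0 (p - 1) = 0 ∧ b (p - 1) 0 = 0) := by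
  have hp : 0 < p := (Fact.out : p.Prime).pos
  rw [eq_zero_iff_coeff ha hp (by omega : p - 1 < p) hdx,
    eq_zero_iff_coeff hb (by omega : p - 1 < p) hp hdy]
  constructor
  · rintro ⟨f, hf⟩
    have hx : d (X 0) = -pderiv 1 f := by
      rw [hf]; simp
    have hy : d (X 1) = pderiv 0 f := by
      rw [hf]; simp
    rw [hx, hy]
    refine ⟨ext_expo fun m n => ?_, fun u v => ?_, fun u v => ?_⟩
    · simp only [map_neg, coeff_add, coeff_neg, coeff_pderiv_zero, coeff_pderiv_one, coeff_zero]
      ring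
    · have h : p * v + (p - 1) + 1 = p * (v + 1) := by rw [Nat.mul_add]; omega
      rw [coeff_neg, coeff_pderiv_one, h]
      simp
    · have h : p * u + (p - 1) + 1 = p * (u + 1) := by rw [Nat.mul_add]; omega
      rw [coeff_pderiv_zero, h]
      simp
  · rintro ⟨hdiv, hP, hQ⟩
    -- `p ∣ k + 1` means `k = p * u + (p - 1)` for some `u`
    have hrep : ∀ k, p ∣ k + 1 → ∃ u, k = p * u + (p - 1) := by
      rintro k ⟨w, hw⟩
      obtain ⟨u, rfl⟩ : ∃ u, w = u + 1 :=
        Nat.exists_eq_succ_of_ne_zero (by rintro rfl; simp at hw)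
      exact ⟨u, by rw [Nat.mul_add] at hw; omega⟩
    obtain ⟨f, hf0, hf1⟩ := exists_potential p (d (X 0)) (d (X 1)) hdiv
      (by
        rintro m n ⟨u, rfl⟩ hn
        obtain ⟨v, rfl⟩ := hrep n hn
        exact hP u v)
      (by
        rintro m n hm ⟨v, rfl⟩
        obtain ⟨u, rfl⟩ := hrep m hm
        exact hQ u v)
    refine ⟨f, fun g => ?_⟩
    have hd : d = pderiv 0 f • pderiv 1 - pderiv 1 f • pderiv 0 := by
      apply derivation_ext
      intro i
      fin_cases i <;> simp [hf0, hf1]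
    rw [hd]
    simp [smul_eq_mul]
end

section
/- Let K be a unique factorization domain of characteristic p > 0 and let d be a K-derivation of K[x,y] with d(x), d(y) coprime (gcd(d(x), d(y)) a unit) and divergence d* = 0. Write d(x) = Σ_{0≤i,j<p} a_{ij} x^i y^j and d(y) = Σ_{0≤i,j<p} b_{ij} x^i y^j with a_{ij}, b_{ij} ∈ K[x^p, y^p]. Then K[x,y]^d = K[x^p, y^p] if and only if a_{0,p−1} ≠ 0 or b_{p−1,0} ≠ 0. -/
/-!
Write `f = d x`, `g = d y`, `α = a_{0,p-1}`, `β = b_{p-1,0}`. Since the divergence vanishes, the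
form `f dy - g dx` is closed, and in characteristic `p` this means that there is a polynomial `H`
with `f = H_y + α y^{p-1}` and `g = -H_x + β x^{p-1}` (`exists_hamiltonian`,
`sub_integrablePart_eq`).

If `α = β = 0`, then `d = H_y ∂x - H_x ∂y` kills `H`. If `H` were in `K[x^p, y^p]`, then `f = g = 0`,
which coprimality excludes; so `H` is a non-trivial constant.

Conversely, let `q ∉ K[x^p, y^p]` be a constant of `d`. The `p`-th iterate `d^p` is a derivation which
also kills `q`, and `q` has a nonzero partial derivative, so `f d^p(y) - g d^p(x) = 0`
(`det_iterate_eq_zero`). On the other hand this determinant equals `α g^p - β f^p` by an identity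
of Katz (`det_iterate_eq`): apply `d^{p-1}` to `d H = β x^{p-1} d x - α y^{p-1} d y` and use
Hochschild's formula `D^{p-1}(y^{p-1} D y) = y^{p-1} D^p y - (D y)^p` (`iterate_hochschild`). Hence
`α g^p = β f^p`, so `f^p ∣ α` and `g^p ∣ β` by coprimality. As `α y^{p-1}` consists of some of the
terms of `f`, its degree is at most `deg f`, which forces `α = 0`; likewise `β = 0`
(`eq_zero_of_pow_dvd`).

Hochschild's formula is obtained from the chain rule for iterates of `D`, whose coefficients are
Bell polynomials: because `D^p` is a derivation, all coefficients at level `p` vanish except the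
first and the last one.
-/

open MvPolynomial

/-! ### Iterates of a derivation in characteristic `p` -/

theorem iterate_leibniz {K R : Type*} [CommRing K] [CommRing R] [Algebra K R]
    (D : Derivation K R R) (n : ℕ) (u v : R) :
    D^[n] (u * v) = ∑ ij ∈ Finset.HasAntidiagonal.antidiagonal n,
      n.choose ij.1 • (D^[ij.1] u * D^[ij.2] v) := by
  induction n with
  | zero => simp
  | succ n ih =>
    rw [Finset.sum_antidiagonal_choose_succ_nsmul (fun i j => D^[i] u * D^[j] v) n,
      Function.iterate_succ_apply', ih, map_sum, ← Finset.sum_add_distrib]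
    refine Finset.sum_congr rfl fun ij hij => ?_
    rw [Finset.HasAntidiagonal.mem_antidiagonal] at hij
    have h : n.choose ij.2 = n.choose ij.1 := by
      rw [← hij, add_comm, Nat.choose_symm_add, add_comm]
    rw [map_nsmul, Derivation.leibniz, h, ← smul_add]
    simp only [Function.iterate_succ_apply', smul_eq_mul]
    congr 1
    ring

theorem iterate_char_leibniz {K R : Type*} [CommRing K] [CommRing R] [Algebra K R]
    (p : ℕ) [hp : Fact p.Prime] [CharP R p] (D : Derivation K R R) (u v : R) :
    D^[p] (u * v) = u * D^[p] v + v * D^[p] u := by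
  rw [iterate_leibniz, Finset.Nat.sum_antidiagonal_eq_sum_range_succ_mk,
    Finset.sum_range_succ]
  have hp0 := hp.out.pos
  rw [← Nat.succ_pred_eq_of_pos hp0, Finset.sum_range_succ', Nat.succ_pred_eq_of_pos hp0]
  rw [Finset.sum_eq_zero]
  · simp [mul_comm]
  · intro i hi
    rw [Finset.mem_range, Nat.pred_eq_sub_one] at hi
    rw [nsmul_eq_mul, (CharP.cast_eq_zero_iff R p _).2
      (hp.out.dvd_choose_self (Nat.succ_ne_zero i) (by omega)), zero_mul]

/-- In characteristic `p`, the `p`-th iterate of a derivation, as a derivation. -/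
noncomputable def charIterate {K R : Type*} [CommRing K] [CommRing R] [Algebra K R]
    (p : ℕ) [Fact p.Prime] [CharP R p] (D : Derivation K R R) : Derivation K R R :=
  Derivation.mk' ((D : R →ₗ[K] R) ^ p) fun u v => by
    simpa [Module.End.pow_apply] using iterate_char_leibniz p D u v

theorem charIterate_apply {K R : Type*} [CommRing K] [CommRing R] [Algebra K R]
    (p : ℕ) [Fact p.Prime] [CharP R p] (D : Derivation K R R) (u : R) :
    charIterate p D u = D^[p] u := by
  simp [charIterate, Module.End.pow_apply]

/-- The coefficients of the chain rule for iterates of a derivation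
(partial Bell polynomials in `y, D y, D² y, …`): `Dᵏ (G y) = ∑ j, G⁽ʲ⁾ y * bell D y k j`
for every polynomial `G`. -/
noncomputable def bell {K R : Type*} [CommRing K] [CommRing R] [Algebra K R]
    (D : Derivation K R R) (y : R) : ℕ → ℕ → R
  | 0, 0 => 1
  | 0, _ + 1 => 0
  | k + 1, 0 => D (bell D y k 0)
  | k + 1, j + 1 => D (bell D y k (j + 1)) + bell D y k j * D y

section bell
variable {K R : Type*} [CommRing K] [CommRing R] [Algebra K R] (D : Derivation K R R) (y : R)

theorem bell_of_lt (k j : ℕ) (h : k < j) : bell D y k j = 0 := by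
  induction k generalizing j with
  | zero =>
    obtain ⟨j, rfl⟩ := Nat.exists_eq_succ_of_ne_zero h.ne'
    simp [bell]
  | succ k ih =>
    obtain ⟨j, rfl⟩ := Nat.exists_eq_succ_of_ne_zero (Nat.ne_zero_of_lt h)
    simp [bell, ih (j + 1) (by omega), ih j (by omega)]

theorem bell_self (k : ℕ) : bell D y k k = D y ^ k := by
  induction k with
  | zero => simp [bell]
  | succ k ih => simp [bell, ih, bell_of_lt D y k (k + 1) (by omega), pow_succ]

theorem bell_succ_zero (k : ℕ) : bell D y (k + 1) 0 = 0 := by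
  induction k with
  | zero => simp [bell]
  | succ k ih => rw [bell, ih, map_zero]

/-- The chain rule for iterates, for the `k`-th iterate of `D` at `yᵐ * D y`. The form `yᵐ * D y`
is used instead of `D (yᵐ⁺¹)` since `m + 1` may vanish in `R`. -/
theorem iterate_pow_mul (m k : ℕ) :
    D^[k] (y ^ m * D y) = ∑ j ∈ Finset.range (k + 1),
      (m.descFactorial j : R) * y ^ (m - j) * bell D y (k + 1) (j + 1) := by
  induction k with
  | zero => simp [bell]
  | succ k ih =>
    have hD : ∀ j, D ((m.descFactorial j : R) * y ^ (m - j)) =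
        (m.descFactorial (j + 1) : R) * y ^ (m - (j + 1)) * D y := fun j => by
      rw [Derivation.leibniz, Derivation.leibniz_pow, D.map_natCast, Nat.descFactorial_succ,
        Nat.sub_sub]
      simp only [smul_eq_mul, nsmul_eq_mul]
      push_cast
      ring
    rw [Function.iterate_succ_apply', ih, map_sum]
    have h1 : ∀ j, (m.descFactorial j : R) * y ^ (m - j) * bell D y (k + 1 + 1) (j + 1) =
        (m.descFactorial j : R) * y ^ (m - j) * D (bell D y (k + 1) (j + 1)) +
        (m.descFactorial j : R) * y ^ (m - j) * D y * bell D y (k + 1) j := fun j => by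
      rw [bell]; ring
    simp only [h1, Finset.sum_add_distrib]
    rw [Finset.sum_range_succ (fun j => (m.descFactorial j : R) * y ^ (m - j) *
        D (bell D y (k + 1) (j + 1))) (k + 1), bell_of_lt D y (k + 1) (k + 1 + 1) (by omega),
      Finset.sum_range_succ' (fun j => (m.descFactorial j : R) * y ^ (m - j) * D y *
        bell D y (k + 1) j), bell_succ_zero]
    simp only [map_zero, mul_zero, add_zero]
    rw [← Finset.sum_add_distrib]
    refine Finset.sum_congr rfl fun j _ => ?_
    rw [Derivation.leibniz, hD]
    simp only [smul_eq_mul]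
    ring

variable (p : ℕ) [hp : Fact p.Prime]

theorem bell_char_one : bell D y p 1 = D^[p] y := by
  have hp0 := hp.out.pos
  have h := iterate_pow_mul D y 0 (p - 1)
  rw [Finset.sum_range_succ', Nat.sub_add_cancel hp0] at h
  simp only [pow_zero, one_mul, Nat.descFactorial_succ, Nat.zero_sub, zero_mul] at h
  rw [← Function.iterate_succ_apply, Nat.succ_eq_add_one, Nat.sub_add_cancel hp0] at h
  simpa using h.symm

variable [IsDomain R] [CharP R p]

/-- Since `Dᵖ` is a derivation, it agrees with its chain rule `Dᵖ (G y) = G' y * Dᵖ y`, which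
kills all intermediate Bell coefficients. -/
theorem bell_char_eq_zero (m : ℕ) (hm0 : 0 < m) (hm : m + 1 < p) : bell D y p (m + 1) = 0 := by
  induction m using Nat.strong_induction_on with
  | _ m ih =>
    have hp0 := hp.out.pos
    have hm1 : ((m + 1 : ℕ) : R) ≠ 0 := by
      rw [Ne, CharP.cast_eq_zero_iff R p]
      exact Nat.not_dvd_of_pos_of_lt (by omega) hm
    have hmf : (m.factorial : R) ≠ 0 := by
      rw [Ne, CharP.cast_eq_zero_iff R p, hp.out.dvd_factorial]
      omega
    -- `Dᵖ⁻¹ (yᵐ D y) = yᵐ Dᵖ y`, since `yᵐ D y = D (yᵐ⁺¹) / (m + 1)`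
    have key : D^[p - 1] (y ^ m * D y) = y ^ m * D^[p] y := by
      apply mul_left_cancel₀ hm1
      have h := (charIterate p D).leibniz_pow y (m + 1)
      rw [charIterate_apply, charIterate_apply] at h
      conv_lhs at h => rw [← Nat.sub_add_cancel hp0, Function.iterate_succ_apply,
        Derivation.leibniz_pow]
      have h2 : D^[p - 1] ((m + 1) • y ^ (m + 1 - 1) • D y) =
          (m + 1) • D^[p - 1] (y ^ m * D y) := by
        have := map_nsmul ((D : R →ₗ[K] R) ^ (p - 1)) (m + 1) (y ^ m * D y)
        simpa [Module.End.pow_apply] using this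
      rw [h2] at h
      simpa [nsmul_eq_mul] using h
    rw [iterate_pow_mul, Nat.sub_add_cancel hp0,
      ← Finset.sum_subset (Finset.range_subset_range.2 (by omega : m + 1 ≤ p)),
      Finset.sum_range_succ, ← Nat.succ_pred_eq_of_pos hm0,
      Finset.sum_range_succ', Nat.succ_pred_eq_of_pos hm0, Finset.sum_eq_zero] at key
    · simpa [Nat.descFactorial_self, bell_char_one, hmf] using key
    · intro j hj
      rw [Finset.mem_range, Nat.pred_eq_sub_one] at hj
      rw [ih (j + 1) (by omega) (by omega) (by omega), mul_zero]
    · intro j _ hj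
      rw [Finset.mem_range] at hj
      rw [Nat.descFactorial_of_lt (by omega)]
      simp

/-- Hochschild's formula. In the chain rule for `Dᵖ⁻¹ (yᵖ⁻¹ D y)` only two Bell coefficients
survive: the first one, `Dᵖ y`, and the last one, `(D y)ᵖ`, which carries the factor
`(p - 1)! = -1`. -/
theorem iterate_hochschild :
    D^[p - 1] (y ^ (p - 1) * D y) = y ^ (p - 1) * D^[p] y - D y ^ p := by
  have hp2 := hp.out.two_le
  rw [iterate_pow_mul, Nat.sub_add_cancel hp.out.pos]
  obtain ⟨q, rfl⟩ : ∃ q, p = q + 2 := ⟨p - 2, by omega⟩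
  rw [Finset.sum_range_succ, Finset.sum_range_succ', Finset.sum_eq_zero]
  · have hw : ((q + 1).descFactorial q : R) = -1 := by
      rw [show (q + 1).descFactorial q = (q + 1).factorial by
        simp [← Nat.descFactorial_self]]
      have := congrArg (ZMod.castHom (dvd_refl (q + 2)) R) (ZMod.wilsons_lemma (q + 2))
      simpa using this
    simp [bell_char_one, bell_self, hw, sub_eq_add_neg]
  · intro j hj
    rw [Finset.mem_range] at hj
    rw [bell_char_eq_zero D y (q + 2) (j + 1) (by omega) (by omega), mul_zero]

end bell
/-! ### Partial antiderivatives in `K[x, y]` and the subring `K[xᵖ, yᵖ]` -/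

section antideriv
variable {K : Type*} [CommRing K] (p : ℕ)

/-- The partial antiderivative with respect to the `i`-th variable: `K`-linear, sending a monomial
`xᵐ` to `xᵐ * x_i / (m_i + 1)` when `p ∤ m_i + 1`. By Fermat's little theorem the inverse of
`m_i + 1` is written as `(m_i + 1) ^ (p - 2)`. -/
noncomputable def antideriv (i : Fin 2) : MvPolynomial (Fin 2) K →ₗ[K] MvPolynomial (Fin 2) K :=
  (basisMonomials (Fin 2) K).constr K fun s =>
    monomial (s + Finsupp.single i 1) ((s i + 1 : ℕ) ^ (p - 2) : K)

theorem antideriv_monomial (i : Fin 2) (s : Fin 2 →₀ ℕ) (r : K) :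
    antideriv p i (monomial s r) =
      monomial (s + Finsupp.single i 1) (r * ((s i + 1 : ℕ) : K) ^ (p - 2)) := by
  have h : monomial s r = r • basisMonomials (Fin 2) K s := by
    simp [smul_monomial]
  rw [h, map_smul, antideriv, Module.Basis.constr_basis, smul_monomial, smul_eq_mul]

/-- The projection that keeps exactly the monomials `xᵐ` with `p ∤ m_i + 1`, that is, the part
which has an antiderivative with respect to the `i`-th variable. -/
noncomputable def integrablePart (i : Fin 2) :
    MvPolynomial (Fin 2) K →ₗ[K] MvPolynomial (Fin 2) K :=
  (pderiv i : Derivation K _ (MvPolynomial (Fin 2) K)).toLinearMap ∘ₗ antideriv p i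

theorem pderiv_antideriv (i : Fin 2) (q : MvPolynomial (Fin 2) K) :
    pderiv i (antideriv p i q) = integrablePart p i q := rfl

theorem pderiv_antideriv_of_ne {i j : Fin 2} (hij : i ≠ j) (q : MvPolynomial (Fin 2) K) :
    pderiv j (antideriv p i q) = antideriv p i (pderiv j q) := by
  induction q using MvPolynomial.induction_on' with
  | monomial s r =>
    rw [antideriv_monomial, pderiv_monomial, pderiv_monomial, antideriv_monomial]
    by_cases hs : s j = 0
    · simp [hs, hij]
    · congr 1
      · congr 1
        ext k
        by_cases hk : k = j
        · subst hk; simp [hij]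
        · simp [Finsupp.single_apply, Ne.symm hk]
      · simp [hij, hij.symm]
        ring
  | add u v hu hv => simp only [map_add, hu, hv]

theorem pderiv_pderiv_comm (i j : Fin 2) (q : MvPolynomial (Fin 2) K) :
    pderiv i (pderiv j q) = pderiv j (pderiv i q) := by
  have h : ⁅(pderiv i : Derivation K (MvPolynomial (Fin 2) K) (MvPolynomial (Fin 2) K)),
      (pderiv j : Derivation K (MvPolynomial (Fin 2) K) (MvPolynomial (Fin 2) K))⁆ = 0 := by
    classical
    refine derivation_ext fun k => ?_
    rw [Derivation.commutator_apply, pderiv_X, pderiv_X]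
    simp only [Pi.single_apply]
    split_ifs <;> simp
  have := congrArg (fun D => D q) h
  simpa [Derivation.commutator_apply, sub_eq_zero] using this

theorem pderiv_integrablePart_of_ne {i j : Fin 2} (hij : i ≠ j) (q : MvPolynomial (Fin 2) K) :
    pderiv j (integrablePart p i q) = integrablePart p i (pderiv j q) := by
  rw [← pderiv_antideriv, ← pderiv_antideriv, pderiv_pderiv_comm, pderiv_antideriv_of_ne p hij]

theorem derivation_eq (D : Derivation K (MvPolynomial (Fin 2) K) (MvPolynomial (Fin 2) K))
    (q : MvPolynomial (Fin 2) K) :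
    D q = pderiv 0 q * D (X 0) + pderiv 1 q * D (X 1) := by
  have h : D = D (X 0) • pderiv 0 + D (X 1) • pderiv 1 := by
    refine derivation_ext fun k => ?_
    fin_cases k <;> simp
  conv_lhs => rw [h]
  simp [mul_comm]

theorem derivation_eq_zero_of_mem_adjoin_s7 [CharP K p]
    (D : Derivation K (MvPolynomial (Fin 2) K) (MvPolynomial (Fin 2) K))
    {q : MvPolynomial (Fin 2) K}
    (hq : q ∈ Algebra.adjoin K ({X 0 ^ p, X 1 ^ p} : Set (MvPolynomial (Fin 2) K))) :
    D q = 0 := by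
  induction hq using Algebra.adjoin_induction with
  | mem x hx =>
    rcases hx with rfl | rfl <;> simp [Derivation.leibniz_pow, CharP.cast_eq_zero]
  | algebraMap r => exact D.map_algebraMap r
  | add x y _ _ hx hy => rw [map_add, hx, hy, add_zero]
  | mul x y _ _ hx hy => rw [Derivation.leibniz, hx, hy, smul_zero, smul_zero, add_zero]

theorem iterate_mul_of_mem_adjoin [CharP K p]
    (D : Derivation K (MvPolynomial (Fin 2) K) (MvPolynomial (Fin 2) K))
    {c : MvPolynomial (Fin 2) K}
    (hc : c ∈ Algebra.adjoin K ({X 0 ^ p, X 1 ^ p} : Set (MvPolynomial (Fin 2) K)))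
    (n : ℕ) (q : MvPolynomial (Fin 2) K) : D^[n] (c * q) = c * D^[n] q := by
  induction n with
  | zero => rfl
  | succ n ih =>
    rw [Function.iterate_succ_apply', Function.iterate_succ_apply', ih, Derivation.leibniz,
      derivation_eq_zero_of_mem_adjoin_s7 p D hc]
    simp

theorem antideriv_mul_of_mem_adjoin [CharP K p] (i : Fin 2) {c : MvPolynomial (Fin 2) K}
    (hc : c ∈ Algebra.adjoin K ({X 0 ^ p, X 1 ^ p} : Set (MvPolynomial (Fin 2) K)))
    (q : MvPolynomial (Fin 2) K) : antideriv p i (c * q) = c * antideriv p i q := by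
  have hX : ∀ (j : Fin 2) (q : MvPolynomial (Fin 2) K),
      antideriv p i (X j ^ p * q) = X j ^ p * antideriv p i q := fun j q => by
    induction q using MvPolynomial.induction_on' with
    | monomial s r =>
      rw [antideriv_monomial, X_pow_eq_monomial, monomial_mul, monomial_mul, antideriv_monomial,
        add_assoc, one_mul, one_mul]
      congr 2
      by_cases hij : j = i
      · subst hij; simp
      · simp [hij]
    | add u v hu hv => simp only [mul_add, map_add, hu, hv]
  induction hc using Algebra.adjoin_induction generalizing q with
  | mem x hx => rcases hx with rfl | rfl <;> exact hX _ q
  | algebraMap r => rw [← Algebra.smul_def, ← Algebra.smul_def, map_smul]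
  | add x y _ _ hx hy => rw [add_mul, map_add, hx, hy, add_mul]
  | mul x y _ _ hx hy => rw [mul_assoc, hx, hy, mul_assoc]

theorem integrablePart_mul_of_mem_adjoin [CharP K p] (i : Fin 2) {c : MvPolynomial (Fin 2) K}
    (hc : c ∈ Algebra.adjoin K ({X 0 ^ p, X 1 ^ p} : Set (MvPolynomial (Fin 2) K)))
    (q : MvPolynomial (Fin 2) K) : integrablePart p i (c * q) = c * integrablePart p i q := by
  rw [← pderiv_antideriv, antideriv_mul_of_mem_adjoin p i hc, Derivation.leibniz,
    derivation_eq_zero_of_mem_adjoin_s7 p _ hc, smul_zero, add_zero, smul_eq_mul, pderiv_antideriv]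

variable [hp : Fact p.Prime]

theorem integrablePart_monomial (i : Fin 2) (s : Fin 2 →₀ ℕ) (r : K) :
    integrablePart p i (monomial s r) = monomial s (r * ((s i + 1 : ℕ) : K) ^ (p - 1)) := by
  have hp2 := hp.out.two_le
  rw [← pderiv_antideriv, antideriv_monomial, pderiv_monomial, add_tsub_cancel_right]
  congr 1
  rw [show p - 1 = p - 2 + 1 by omega, pow_succ]
  simp [mul_assoc]

theorem coeff_integrablePart (i : Fin 2) (q : MvPolynomial (Fin 2) K) (s : Fin 2 →₀ ℕ) :
    coeff s (integrablePart p i q) = coeff s q * ((s i + 1 : ℕ) : K) ^ (p - 1) := by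
  induction q using MvPolynomial.induction_on' with
  | monomial t r =>
    rw [integrablePart_monomial, coeff_monomial, coeff_monomial]
    split_ifs with h
    · rw [h]
    · simp
  | add u v hu hv => simp only [map_add, coeff_add, hu, hv, add_mul]

theorem pow_natCast_mul [CharP K p] (n : ℕ) : (n : K) * (n : K) ^ (p - 1) = n := by
  rw [← pow_succ', Nat.sub_add_cancel hp.out.pos]
  have := congrArg (ZMod.castHom (dvd_refl p) K) (ZMod.pow_card (n : ZMod p))
  rwa [map_pow, map_natCast] at this

theorem antideriv_pderiv_monomial (i : Fin 2) (s : Fin 2 →₀ ℕ) (r : K) :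
    antideriv p i (pderiv i (monomial s r)) = monomial s (r * (s i : K) ^ (p - 1)) := by
  have hp2 := hp.out.two_le
  rw [pderiv_monomial, antideriv_monomial]
  by_cases hs : s i = 0
  · rw [hs]; simp [show p - 1 ≠ 0 by omega]
  · have h1 : Finsupp.single i 1 ≤ s := by
      rw [Finsupp.single_le_iff]; omega
    rw [tsub_add_cancel_of_le h1, show p - 1 = p - 2 + 1 by omega, pow_succ',
      Finsupp.tsub_apply, Finsupp.single_eq_same, Nat.sub_add_cancel (by omega), mul_assoc]

theorem coeff_antideriv_pderiv (i : Fin 2) (q : MvPolynomial (Fin 2) K) (s : Fin 2 →₀ ℕ) :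
    coeff s (antideriv p i (pderiv i q)) = coeff s q * (s i : K) ^ (p - 1) := by
  induction q using MvPolynomial.induction_on' with
  | monomial t r =>
    rw [antideriv_pderiv_monomial, coeff_monomial, coeff_monomial]
    split_ifs with h
    · rw [h]
    · simp
  | add u v hu hv => simp only [map_add, coeff_add, hu, hv, add_mul]

theorem integrablePart_pderiv [CharP K p] (i : Fin 2) (q : MvPolynomial (Fin 2) K) :
    integrablePart p i (pderiv i q) = pderiv i q := by
  ext s
  rw [coeff_integrablePart, coeff_pderiv]
  have := pow_natCast_mul (K := K) p (s i + 1)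
  push_cast at this ⊢
  rw [mul_assoc, this]

/-- A vector field `f ∂x + g ∂y` with zero divergence is Hamiltonian up to the non-integrable
parts of `f` and `g`. -/
theorem exists_hamiltonian [CharP K p] (f g : MvPolynomial (Fin 2) K)
    (h : pderiv 0 f + pderiv 1 g = 0) :
    ∃ H : MvPolynomial (Fin 2) K,
      pderiv 1 H = integrablePart p 1 f ∧ pderiv 0 H = - integrablePart p 0 g := by
  have h10 : (1 : Fin 2) ≠ 0 := by decide
  have hr : pderiv 1 (g + pderiv 0 (antideriv p 1 f)) = 0 := by
    rw [map_add, pderiv_pderiv_comm, pderiv_antideriv, pderiv_integrablePart_of_ne p h10,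
      eq_neg_of_add_eq_zero_left h, map_neg, integrablePart_pderiv, add_neg_cancel]
  refine ⟨antideriv p 1 f - antideriv p 0 (g + pderiv 0 (antideriv p 1 f)), ?_, ?_⟩
  · rw [map_sub, pderiv_antideriv_of_ne p h10.symm, hr, map_zero, sub_zero, pderiv_antideriv]
  · rw [map_sub, pderiv_antideriv, map_add, integrablePart_pderiv]
    ring

theorem mem_adjoin_of_pderiv_eq_zero [IsDomain K] [CharP K p] (q : MvPolynomial (Fin 2) K)
    (h : ∀ i, pderiv i q = 0) :
    q ∈ Algebra.adjoin K ({X 0 ^ p, X 1 ^ p} : Set (MvPolynomial (Fin 2) K)) := by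
  rw [q.as_sum]
  refine Subalgebra.sum_mem _ fun s hs => ?_
  have hd : ∀ i, p ∣ s i := fun i => by
    have h1 := coeff_antideriv_pderiv p i q s
    rw [h i, map_zero, coeff_zero] at h1
    rw [← CharP.cast_eq_zero_iff K p]
    exact eq_zero_of_pow_eq_zero
      ((mul_eq_zero.1 h1.symm).resolve_left (mem_support_iff.1 hs))
  rw [monomial_eq, Finsupp.prod_fintype _ _ (by simp), Fin.prod_univ_two]
  obtain ⟨m, hm⟩ := hd 0
  obtain ⟨n, hn⟩ := hd 1
  rw [hm, hn, pow_mul, pow_mul]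
  refine Subalgebra.mul_mem _ (Subalgebra.algebraMap_mem _ _) (Subalgebra.mul_mem _
    (Subalgebra.pow_mem _ (Algebra.subset_adjoin (by simp)) _)
    (Subalgebra.pow_mem _ (Algebra.subset_adjoin (by simp)) _))

/-- The degree argument: the non-integrable part `α * x_i ^ (p - 1)` of `f` has degree at most
`deg f`, so `α` is not divisible by `f ^ p` unless it vanishes. -/
theorem eq_zero_of_pow_dvd [IsDomain K] (i : Fin 2) (f α : MvPolynomial (Fin 2) K)
    (hα : f - integrablePart p i f = α * X i ^ (p - 1)) (hdvd : f ^ p ∣ α) : α = 0 := by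
  by_contra h0
  have hp2 := hp.out.two_le
  obtain ⟨k, rfl⟩ := hdvd
  have hf : f ^ p ≠ 0 := left_ne_zero_of_mul h0
  have hk : k ≠ 0 := right_ne_zero_of_mul h0
  have hle : (f - integrablePart p i f).totalDegree ≤ f.totalDegree := by
    apply totalDegree_le_of_support_subset
    intro s hs
    rw [mem_support_iff] at hs ⊢
    intro h
    exact hs (by rw [coeff_sub, coeff_integrablePart, h, zero_mul, sub_zero])
  have hpow : f.totalDegree ≤ (f ^ p).totalDegree := by
    have hp1 : f ^ p = f * f ^ (p - 1) := by
      rw [← pow_succ', Nat.sub_add_cancel hp.out.pos]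
    rw [hp1] at hf ⊢
    rw [totalDegree_mul_of_isDomain (left_ne_zero_of_mul hf) (right_ne_zero_of_mul hf)]
    exact Nat.le_add_right _ _
  rw [hα, totalDegree_mul_of_isDomain h0 (pow_ne_zero _ (X_ne_zero i)),
    totalDegree_mul_of_isDomain hf hk, totalDegree_X_pow] at hle
  omega

end antideriv

/-! ### The criterion -/

section criterion
variable {K : Type*} [CommRing K] [IsDomain K] (p : ℕ) [hp : Fact p.Prime] [CharP K p]

theorem natCast_pow_eq_one {n : ℕ} (h0 : 0 < n) (h : n < p) : (n : K) ^ (p - 1) = 1 := by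
  have hn : (n : K) ≠ 0 := by
    rw [Ne, CharP.cast_eq_zero_iff K p]
    exact Nat.not_dvd_of_pos_of_lt h0 h
  exact mul_left_cancel₀ hn (by rw [pow_natCast_mul, mul_one])

theorem integrablePart_X_pow_mul {i j : Fin 2} (hij : i ≠ j) (m n : ℕ) (hn : n < p) :
    integrablePart p i (X j ^ m * X i ^ n : MvPolynomial (Fin 2) K) =
      if n = p - 1 then 0 else X j ^ m * X i ^ n := by
  have hp2 := hp.out.two_le
  rw [X_pow_eq_monomial, X_pow_eq_monomial, monomial_mul, integrablePart_monomial]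
  have hs : (Finsupp.single j m + Finsupp.single i n : Fin 2 →₀ ℕ) i = n := by simp [hij]
  rw [hs]
  split_ifs with h
  · rw [h, Nat.sub_add_cancel hp.out.pos, CharP.cast_eq_zero, zero_pow (by omega), mul_zero,
      map_zero]
  · rw [natCast_pow_eq_one p (by omega) (by omega), mul_one]

theorem antideriv_pderiv_X_pow (j : Fin 2) (m : ℕ) (hm : m < p) :
    antideriv p j (pderiv j (X j ^ m : MvPolynomial (Fin 2) K)) =
      if m = 0 then 0 else X j ^ m := by
  have hp2 := hp.out.two_le
  rw [X_pow_eq_monomial, antideriv_pderiv_monomial, Finsupp.single_eq_same]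
  split_ifs with h
  · rw [h, Nat.cast_zero, zero_pow (by omega), mul_zero, map_zero]
  · rw [natCast_pow_eq_one p (by omega) hm, mul_one]

/-- If the derivative of `f` in one variable `x_j` is integrable in the other variable `x_i`, then
the non-integrable part of `f` consists of the single term with `x_i ^ (p - 1)` and `x_j ^ 0`. -/
theorem sub_integrablePart_eq {i j : Fin 2} (hij : i ≠ j) (f : MvPolynomial (Fin 2) K)
    (a : ℕ → ℕ → MvPolynomial (Fin 2) K)
    (ha : ∀ m n, a m n ∈ Algebra.adjoin K ({X 0 ^ p, X 1 ^ p} : Set (MvPolynomial (Fin 2) K)))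
    (hf : f = ∑ m ∈ Finset.range p, ∑ n ∈ Finset.range p, a m n * X j ^ m * X i ^ n)
    (hfj : integrablePart p i (pderiv j f) = pderiv j f) :
    f - integrablePart p i f = a 0 (p - 1) * X i ^ (p - 1) := by
  have hp0 := hp.out.pos
  set A : MvPolynomial (Fin 2) K := ∑ m ∈ Finset.range p, a m (p - 1) * X j ^ m with hA
  have h1 : f - integrablePart p i f = A * X i ^ (p - 1) := by
    rw [hA, Finset.sum_mul]
    conv_lhs => rw [hf]
    rw [map_sum, ← Finset.sum_sub_distrib]
    refine Finset.sum_congr rfl fun m _ => ?_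
    rw [map_sum, ← Finset.sum_sub_distrib, Finset.sum_eq_single (p - 1)]
    · rw [mul_assoc, integrablePart_mul_of_mem_adjoin p i (ha _ _),
        integrablePart_X_pow_mul p hij m (p - 1) (by omega), if_pos rfl, mul_zero, sub_zero]
    · intro n hn hne
      rw [mul_assoc, integrablePart_mul_of_mem_adjoin p i (ha _ _),
        integrablePart_X_pow_mul p hij m n (Finset.mem_range.1 hn), if_neg hne, sub_self]
    · intro h
      exact absurd (Finset.mem_range.2 (by omega)) h
  have h2 : pderiv j A = 0 := by
    have h3 := congrArg (pderiv j) h1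
    rw [map_sub, pderiv_integrablePart_of_ne p hij, hfj, sub_self, Derivation.leibniz,
      Derivation.leibniz_pow, pderiv_X_of_ne hij] at h3
    simp only [smul_zero, zero_add] at h3
    rw [smul_eq_mul] at h3
    exact (mul_eq_zero.1 h3.symm).resolve_left (pow_ne_zero _ (X_ne_zero i))
  have h4 : A = a 0 (p - 1) := by
    have h5 : antideriv p j (pderiv j A) = A - a 0 (p - 1) := by
      rw [hA, map_sum, map_sum, ← Nat.succ_pred_eq_of_pos hp0, Finset.sum_range_succ',
        Finset.sum_range_succ', Nat.succ_pred_eq_of_pos hp0]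
      have h6 : ∀ m, m < p → antideriv p j (pderiv j (a m (p - 1) * X j ^ m)) =
          a m (p - 1) * if m = 0 then 0 else X j ^ m := fun m hm => by
        rw [Derivation.leibniz, derivation_eq_zero_of_mem_adjoin_s7 p _ (ha _ _), smul_zero,
          add_zero, smul_eq_mul, antideriv_mul_of_mem_adjoin p j (ha _ _),
          antideriv_pderiv_X_pow p j m hm]
      rw [h6 0 hp0, if_pos rfl, mul_zero, add_zero, pow_zero, mul_one, add_sub_cancel_right]
      refine Finset.sum_congr rfl fun m hm => ?_
      rw [Finset.mem_range, Nat.pred_eq_sub_one] at hm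
      rw [h6 (m + 1) (by omega), if_neg (Nat.succ_ne_zero m)]
    rw [h2, map_zero] at h5
    exact (sub_eq_zero.1 h5.symm)
  rw [h1, h4]

/-- Katz's `p`-curvature identity: the determinant of the vector fields `d` and `dᵖ` depends only
on the non-integrable parts `α y ^ (p - 1)` and `β x ^ (p - 1)` of `d x` and `d y`. -/
theorem det_iterate_eq (d : Derivation K (MvPolynomial (Fin 2) K) (MvPolynomial (Fin 2) K))
    (H α β : MvPolynomial (Fin 2) K)
    (hα : α ∈ Algebra.adjoin K ({X 0 ^ p, X 1 ^ p} : Set (MvPolynomial (Fin 2) K)))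
    (hβ : β ∈ Algebra.adjoin K ({X 0 ^ p, X 1 ^ p} : Set (MvPolynomial (Fin 2) K)))
    (hx : d (X 0) = pderiv 1 H + α * X 1 ^ (p - 1))
    (hy : d (X 1) = - pderiv 0 H + β * X 0 ^ (p - 1)) :
    d (X 0) * d^[p] (X 1) - d (X 1) * d^[p] (X 0) = α * d (X 1) ^ p - β * d (X 0) ^ p := by
  have hH : d H = β * (X 0 ^ (p - 1) * d (X 0)) - α * (X 1 ^ (p - 1) * d (X 1)) := by
    rw [derivation_eq d H]
    linear_combination d (X 0) * hy - d (X 1) * hx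
  have h1 : d^[p] H = β * (X 0 ^ (p - 1) * d^[p] (X 0) - d (X 0) ^ p) -
      α * (X 1 ^ (p - 1) * d^[p] (X 1) - d (X 1) ^ p) := by
    rw [← iterate_hochschild, ← iterate_hochschild, ← iterate_mul_of_mem_adjoin p d hα,
      ← iterate_mul_of_mem_adjoin p d hβ]
    conv_lhs => rw [← Nat.sub_add_cancel hp.out.pos, Function.iterate_succ_apply, hH]
    exact iterate_map_sub d (p - 1) _ _
  have h2 : d^[p] H = pderiv 0 H * d^[p] (X 0) + pderiv 1 H * d^[p] (X 1) := by
    simpa only [charIterate_apply] using derivation_eq (charIterate p d) H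
  linear_combination d^[p] (X 1) * hx - d^[p] (X 0) * hy - h2 + h1

/-- A constant outside `K[xᵖ, yᵖ]` is killed by both `d` and `dᵖ`, which makes `d` and `dᵖ`
proportional. -/
theorem det_iterate_eq_zero
    (d : Derivation K (MvPolynomial (Fin 2) K) (MvPolynomial (Fin 2) K))
    (q : MvPolynomial (Fin 2) K) (hq : d q = 0) (hne : ∃ i, pderiv i q ≠ 0) :
    d (X 0) * d^[p] (X 1) - d (X 1) * d^[p] (X 0) = 0 := by
  have hqp : d^[p] q = 0 := by
    rw [← Nat.sub_add_cancel hp.out.pos, Function.iterate_succ_apply, hq]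
    exact iterate_map_zero d _
  have h1 := derivation_eq d q
  have h2 := derivation_eq (charIterate p d) q
  simp only [charIterate_apply] at h2
  rw [hq] at h1
  rw [hqp] at h2
  obtain ⟨i, hi⟩ := hne
  apply (mul_eq_zero.1 _).resolve_left hi
  fin_cases i
  · change pderiv 0 q * _ = 0
    linear_combination d (X 1) * h2 - d^[p] (X 1) * h1
  · change pderiv 1 q * _ = 0
    linear_combination d^[p] (X 0) * h1 - d (X 0) * h2

end criterion

/-- Lemma 2 b).  `K` a UFD of characteristic `p > 0`, `d` a
`K`-derivation of `K[x,y]` with `d(x), d(y)` coprime and divergence `d* = 0`,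
and `d(x) = Σ a_{ij} x^i y^j`, `d(y) = Σ b_{ij} x^i y^j` with coefficients in
`K[x^p,y^p]`.  Then `K[x,y]^d = K[x^p,y^p]` iff `a_{0,p-1} ≠ 0` or `b_{p-1,0} ≠ 0`. -/
theorem lemma2b_trivial_constants_criterion
    {K : Type*} [CommRing K] [IsDomain K] [UniqueFactorizationMonoid K]
    (p : ℕ) [Fact p.Prime] [CharP K p]
    (d : Derivation K (MvPolynomial (Fin 2) K) (MvPolynomial (Fin 2) K))
    (hcop : ∀ q : MvPolynomial (Fin 2) K, q ∣ d (X 0) → q ∣ d (X 1) → IsUnit q)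
    (hdiv : pderiv (0 : Fin 2) (d (X 0)) + pderiv (1 : Fin 2) (d (X 1)) = 0)
    (a b : ℕ → ℕ → MvPolynomial (Fin 2) K)
    (ha : ∀ i j, a i j ∈ Algebra.adjoin K ({X 0 ^ p, X 1 ^ p} : Set (MvPolynomial (Fin 2) K)))
    (hb : ∀ i j, b i j ∈ Algebra.adjoin K ({X 0 ^ p, X 1 ^ p} : Set (MvPolynomial (Fin 2) K)))
    (hdx : d (X 0) = ∑ i ∈ Finset.range p, ∑ j ∈ Finset.range p, a i j * X 0 ^ i * X 1 ^ j)
    (hdy : d (X 1) = ∑ i ∈ Finset.range p, ∑ j ∈ Finset.range p, b i j * X 0 ^ i * X 1 ^ j) :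
    (∀ q : MvPolynomial (Fin 2) K,
        d q = 0 ↔ q ∈ Algebra.adjoin K ({X 0 ^ p, X 1 ^ p} : Set (MvPolynomial (Fin 2) K))) ↔
      (a 0 (p - 1) ≠ 0 ∨ b (p - 1) 0 ≠ 0) := by
  have hα : d (X 0) - integrablePart p 1 (d (X 0)) = a 0 (p - 1) * X 1 ^ (p - 1) := by
    refine sub_integrablePart_eq p (by decide : (1 : Fin 2) ≠ 0) _ a ha hdx ?_
    rw [eq_neg_of_add_eq_zero_left hdiv, map_neg, integrablePart_pderiv]
  have hβ : d (X 1) - integrablePart p 0 (d (X 1)) = b (p - 1) 0 * X 0 ^ (p - 1) := by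
    refine sub_integrablePart_eq p (by decide : (0 : Fin 2) ≠ 1) _ (fun m n => b n m)
      (fun m n => hb n m) ?_ ?_
    · rw [hdy, Finset.sum_comm]
      exact Finset.sum_congr rfl fun _ _ => Finset.sum_congr rfl fun _ _ => by ring
    · rw [eq_neg_of_add_eq_zero_right hdiv, map_neg, integrablePart_pderiv]
  obtain ⟨H, hH1, hH0⟩ := exists_hamiltonian p _ _ hdiv
  have hx : d (X 0) = pderiv 1 H + a 0 (p - 1) * X 1 ^ (p - 1) := by
    rw [hH1]; linear_combination hα
  have hy : d (X 1) = - pderiv 0 H + b (p - 1) 0 * X 0 ^ (p - 1) := by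
    rw [hH0]; linear_combination hβ
  constructor
  · intro hconst
    by_contra! h
    rw [h.1, zero_mul, add_zero] at hx
    rw [h.2, zero_mul, add_zero] at hy
    have hdH : d H = 0 := by
      rw [derivation_eq d H]
      linear_combination d (X 0) * hy - d (X 1) * hx
    have hmem := (hconst H).1 hdH
    rw [derivation_eq_zero_of_mem_adjoin_s7 p _ hmem] at hx hy
    exact not_isUnit_zero (hcop 0 (by rw [hx]) (by rw [hy, neg_zero]))
  · intro h q
    refine ⟨fun hq => ?_, fun hq => derivation_eq_zero_of_mem_adjoin_s7 p d hq⟩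
    by_contra hmem
    have hne : ∃ i, pderiv i q ≠ 0 := by
      by_contra! h0
      exact hmem (mem_adjoin_of_pderiv_eq_zero p q h0)
    have hdet := det_iterate_eq p d H _ _ (ha 0 (p - 1)) (hb (p - 1) 0) hx hy
    rw [det_iterate_eq_zero p d q hq hne] at hdet
    have hrel : IsRelPrime (d (X 0) ^ p) (d (X 1) ^ p) :=
      IsRelPrime.pow fun q h1 h2 => hcop q h1 h2
    have h1 : a 0 (p - 1) = 0 := by
      refine eq_zero_of_pow_dvd p 1 _ _ hα (hrel.dvd_of_dvd_mul_right ?_)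
      exact ⟨b (p - 1) 0, by linear_combination -hdet⟩
    have h2 : b (p - 1) 0 = 0 := by
      refine eq_zero_of_pow_dvd p 0 _ _ hβ (hrel.symm.dvd_of_dvd_mul_right ?_)
      exact ⟨a 0 (p - 1), by linear_combination hdet⟩
    exact h.elim (· h1) (· h2)
end

section
/- Let K be a UFD of characteristic p > 0 and let d be a nonzero K-derivation of K[x,y] with d* = 0, K[x,y]^d ≠ K[x^p,y^p], and d(x), d(y) coprime. Let g ∈ K[x,y] be such that g − g_{(p)} is nonzero, belongs to K[x,y]^d, and has minimal total degree among all nonzero polynomials of the form h − h_{(p)} (h ∈ K[x,y]) belonging to K[x,y]^d. Put ḡ = gcd(∂g/∂x, ∂g/∂y). Then ḡ·d = h·d_g, where h is an invertible element of K. -/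
/-!
Write `a = d x`, `b = d y`, so that `d q = a ∂q/∂x + b ∂q/∂y`. Every derivation kills
`K[x^p, y^p]`, hence `d g = 0`, i.e. `a ∂g/∂x = -b ∂g/∂y`. As `a` and `b` are coprime in the UFD
`K[x,y]`, this forces `∂g/∂x = c b` and `∂g/∂y = -c a` for some `c`
(`exists_common_factor`), which says `d_g = c d`. Coprimality of `a` and `b` also makes `c` a
gcd of the partial derivatives of `g`, so `ḡ = e c` with `e` a unit of `K[x,y]`, that is, a unit
of `K`; then `ḡ d = e c d = e d_g`.
-/

open MvPolynomial

/-- `f_{(p)}`: the coefficient `a₀₀ ∈ K[x^p,y^p]` in the unique representation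
`f = Σ_{0≤i,j<p} a_{ij} x^i y^j` with `a_{ij} ∈ K[x^p,y^p]`; concretely it is the
sum of the monomials of `f` in which both exponents are divisible by `p`. -/
noncomputable def pPart {K : Type*} [CommRing K] (p : ℕ)
    (f : MvPolynomial (Fin 2) K) : MvPolynomial (Fin 2) K :=
  ∑ m ∈ f.support.filter (fun m => ∀ i, p ∣ m i), monomial m (coeff m f)

theorem derivation_eq_pderiv {K : Type*} [CommRing K]
    (d : Derivation K (MvPolynomial (Fin 2) K) (MvPolynomial (Fin 2) K))
    (q : MvPolynomial (Fin 2) K) :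
    d q = d (X 0) * pderiv (0 : Fin 2) q + d (X 1) * pderiv (1 : Fin 2) q := by
  have h : d = d (X 0) • pderiv (0 : Fin 2) + d (X 1) • pderiv (1 : Fin 2) := by
    refine MvPolynomial.derivation_ext fun i => ?_
    fin_cases i <;> simp [pderiv_X]
  exact congrArg (fun D => D q) h

theorem pderiv_pPart {K : Type*} [CommRing K] (p : ℕ) [CharP K p]
    (i : Fin 2) (f : MvPolynomial (Fin 2) K) : pderiv i (pPart p f) = 0 := by
  unfold pPart
  rw [map_sum]
  refine Finset.sum_eq_zero fun m hm => ?_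
  have h : ((m i : ℕ) : K) = 0 := (CharP.cast_eq_zero_iff K p _).2 ((Finset.mem_filter.1 hm).2 i)
  rw [pderiv_monomial, h, mul_zero, monomial_zero]

/-- A syzygy of a coprime pair `(a, b)` is a multiple of the Koszul one. -/
theorem exists_common_factor {R : Type*} [CommRing R] [IsDomain R] [DecompositionMonoid R]
    {a b u v : R} (hab : IsRelPrime a b) (h : a * u + b * v = 0) :
    ∃ c, u = c * b ∧ v = -(c * a) := by
  obtain ⟨c, hc⟩ : b ∣ u := hab.symm.dvd_of_dvd_mul_left ⟨-v, by linear_combination h⟩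
  by_cases hb : b = 0
  · -- Then `a` is a unit, so `u = 0` and `v` is a multiple of `a`.
    subst hb
    have ha : IsUnit a := hab dvd_rfl (dvd_zero a)
    obtain ⟨e, he⟩ := ha.dvd (a := v)
    exact ⟨-e, by simpa using hc, by rw [he]; ring⟩
  · refine ⟨c, by rw [hc, mul_comm], mul_left_cancel₀ hb ?_⟩
    rw [hc] at h
    linear_combination h

/-- Lemma 3 a).  `K` a UFD of characteristic `p > 0`, `d` a nonzero
`K`-derivation of `K[x,y]` with `d* = 0`, `K[x,y]^d ≠ K[x^p,y^p]`, and `d(x), d(y)`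
coprime.  If `g − g_{(p)}` is a nonzero constant of `d` of minimal total degree
among all nonzero constants of the form `h − h_{(p)}`, and
`ḡ = gcd(∂g/∂x, ∂g/∂y)`, then `ḡ·d = h·d_g` for some invertible `h ∈ K`. -/
theorem lemma3a_gbar_factorization
    {K : Type*} [CommRing K] [IsDomain K] [UniqueFactorizationMonoid K]
    (p : ℕ) [Fact p.Prime] [CharP K p]
    (d : Derivation K (MvPolynomial (Fin 2) K) (MvPolynomial (Fin 2) K))
    (hd : d ≠ 0)
    (hdiv : pderiv (0 : Fin 2) (d (X 0)) + pderiv (1 : Fin 2) (d (X 1)) = 0)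
    (hne : {q : MvPolynomial (Fin 2) K | d q = 0} ≠
      ↑(Algebra.adjoin K ({X 0 ^ p, X 1 ^ p} : Set (MvPolynomial (Fin 2) K))))
    (hcop : ∀ q : MvPolynomial (Fin 2) K, q ∣ d (X 0) → q ∣ d (X 1) → IsUnit q)
    (g : MvPolynomial (Fin 2) K)
    (hg₁ : g - pPart p g ≠ 0)
    (hg₂ : d (g - pPart p g) = 0)
    (hgmin : ∀ h : MvPolynomial (Fin 2) K, h - pPart p h ≠ 0 → d (h - pPart p h) = 0 →
      (g - pPart p g).totalDegree ≤ (h - pPart p h).totalDegree)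
    (gbar : MvPolynomial (Fin 2) K)
    (hgbar₁ : gbar ∣ pderiv (0 : Fin 2) g)
    (hgbar₂ : gbar ∣ pderiv (1 : Fin 2) g)
    (hgbar₃ : ∀ q : MvPolynomial (Fin 2) K,
      q ∣ pderiv (0 : Fin 2) g → q ∣ pderiv (1 : Fin 2) g → q ∣ gbar) :
    ∃ h : K, IsUnit h ∧ ∀ q,
      gbar * d q =
        C h * (pderiv (0 : Fin 2) g * pderiv (1 : Fin 2) q
             - pderiv (1 : Fin 2) g * pderiv (0 : Fin 2) q) := by
  have hab : IsRelPrime (d (X 0)) (d (X 1)) := fun q h0 h1 => hcop q h0 h1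
  have hdg : d (X 0) * pderiv (0 : Fin 2) g + d (X 1) * pderiv (1 : Fin 2) g = 0 := by
    rw [derivation_eq_pderiv] at hg₂
    simpa [pderiv_pPart] using hg₂
  obtain ⟨c, hx, hy⟩ := exists_common_factor hab hdg
  obtain ⟨e, he⟩ : c ∣ gbar := hgbar₃ c ⟨_, hx⟩ ⟨-d (X 0), by rw [hy]; ring⟩
  by_cases hc : c = 0
  · subst hc
    exact ⟨1, isUnit_one, fun q => by simp [he, hx, hy]⟩
  have heu : IsUnit e := by
    refine hcop e ?_ ?_
    · rw [he, hy, dvd_neg] at hgbar₂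
      exact (mul_dvd_mul_iff_left hc).1 hgbar₂
    · rw [he, hx] at hgbar₁
      exact (mul_dvd_mul_iff_left hc).1 hgbar₁
  obtain ⟨k, hk, rfl⟩ := MvPolynomial.isUnit_iff_eq_C_of_isReduced.1 heu
  refine ⟨k, hk, fun q => ?_⟩
  rw [derivation_eq_pderiv d q, he, hx, hy]
  ring
end
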